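/- arXiv:2412.16193 — 5 statements merged into one kernel-verified Lean document; each statement's English description precedes it below -/
import Mathlib

section
/- For all n ≥ 0 and α ≥ 0, T_4(3^{2α+3} n + (19·3^{2α+2} − 3)/8) ≡ 0 (mod 3). -/
noncomputable def Tcount (ℓ k n : ℕ) : ℕ :=
  Nat.card {f : Fin k → Σ m : ℕ, Nat.Partition m //
    (∑ i, (f i).1) = n ∧ ∀ i, ∀ p ∈ (f i).2.parts, ¬ ℓ ∣ p}

open PowerSeries Finset

/-- Gaussian binomials in a commutative ring. -/
def gb {R : Type*} [CommRing R] (p : R) : ℕ → ℕ → R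
  | _, 0 => 1
  | 0, _ + 1 => 0
  | n + 1, k + 1 => gb p n k + p ^ (k + 1) * gb p n (k + 1)

/-- Finite `q`-Pochhammer product. -/
def qp {R : Type*} [CommRing R] (p : R) (n : ℕ) : R := ∏ i ∈ range n, (1 - p ^ (i + 1))

lemma gb_zero {R : Type*} [CommRing R] (p : R) (n : ℕ) : gb p n 0 = 1 := by
  cases n <;> rfl

lemma gb_lt {R : Type*} [CommRing R] (p : R) (n k : ℕ) (h : n < k) : gb p n k = 0 := by
  induction n generalizing k with
  | zero => obtain ⟨k, rfl⟩ := Nat.exists_eq_add_of_lt h; simp [gb]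
  | succ n ih =>
    obtain ⟨k, rfl⟩ : ∃ j, k = j + 1 := ⟨k - 1, by omega⟩
    simp [gb, ih k (by omega), ih (k + 1) (by omega)]

lemma gb_self {R : Type*} [CommRing R] (p : R) (n : ℕ) : gb p n n = 1 := by
  induction n with
  | zero => rfl
  | succ n ih => simp [gb, ih, gb_lt]

lemma gb_mul {R : Type*} [CommRing R] (p : R) (s : ℕ) :
    ∀ k l, k + l = s → gb p s k * (qp p k * qp p l) = qp p s := by
  induction s with
  | zero =>
    intro k l h
    obtain ⟨rfl, rfl⟩ : k = 0 ∧ l = 0 := by omega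
    simp [gb, qp]
  | succ s ih =>
    intro k l h
    rcases k with _ | k
    · obtain rfl : l = s + 1 := by omega
      simp [gb, qp]
    rcases l with _ | l
    · obtain rfl : k = s := by omega
      rw [gb_self]; simp [qp]
    have h1 := ih k (l + 1) (by omega)
    have h2 := ih (k + 1) l (by omega)
    have e1 : qp p (k + 1) = qp p k * (1 - p ^ (k + 1)) := prod_range_succ _ _
    have e2 : qp p (l + 1) = qp p l * (1 - p ^ (l + 1)) := prod_range_succ _ _
    have e3 : qp p (s + 1) = qp p s * (1 - p ^ (s + 1)) := prod_range_succ _ _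
    have hs : p ^ (s + 1) = p ^ (k + 1) * p ^ (l + 1) := by rw [← pow_add]; congr 1; omega
    simp only [gb]
    rw [e3, hs, e1]
    rw [e1] at h2
    linear_combination (1 - p ^ (k + 1)) * h1 + p ^ (k + 1) * (1 - p ^ (l + 1)) * h2 +
      p ^ (k + 1) * gb p s (k + 1) * qp p k * (1 - p ^ (k + 1)) * e2

lemma qbinom {R : Type*} [CommRing R] (p y : R) (m : ℕ) (x : R) :
    ∏ i ∈ range m, (y + x * p ^ i) =
      ∑ k ∈ range (m + 1), p ^ (k.choose 2) * gb p m k * x ^ k * y ^ (m - k) := by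
  induction m generalizing x with
  | zero => simp [gb]
  | succ m ih =>
    rw [prod_range_succ']
    have : ∀ i, y + x * p ^ (i + 1) = y + (x * p) * p ^ i := by intro i; ring
    simp_rw [this]
    rw [ih, sum_range_succ' _ (m + 1)]
    have h1 : ∀ k ∈ range (m + 1),
        p ^ ((k + 1).choose 2) * gb p (m + 1) (k + 1) * x ^ (k + 1) * y ^ (m + 1 - (k + 1)) =
        x * (p ^ (k.choose 2) * gb p m k * (x * p) ^ k * y ^ (m - k)) +
        p ^ ((k + 1).choose 2) * gb p m (k + 1) * (x * p) ^ (k + 1) * y ^ (m - k) := by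
      intro k _
      have : (k + 1).choose 2 = k + k.choose 2 := by
        rw [Nat.choose_succ_succ' k 1]; simp
      rw [this, Nat.add_sub_add_right]
      simp only [gb]
      ring
    rw [sum_congr rfl h1, sum_add_distrib, ← mul_sum]
    have h2 : ∑ k ∈ range (m + 1), p ^ (k.choose 2) * gb p m k * (x * p) ^ k * y ^ (m - k) * y =
        (∑ k ∈ range (m + 1), p ^ ((k + 1).choose 2) * gb p m (k + 1) * (x * p) ^ (k + 1) *
          y ^ (m - k)) + y ^ (m + 1) := by
      rw [sum_range_succ', sum_range_succ _ m, gb_lt p m (m + 1) (by omega)]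
      simp only [gb_zero, Nat.choose_zero_succ]
      congr 1
      · simp only [mul_zero, zero_mul, add_zero]
        apply sum_congr rfl
        intro k hk
        rw [mem_range] at hk
        rw [mul_assoc, ← pow_succ]
        congr 2; omega
      · simp [pow_succ]
    rw [← sum_mul] at h2
    simp only [gb_zero, Nat.choose_zero_succ, pow_zero, mul_one, one_mul, Nat.sub_zero]
    linear_combination h2

lemma choose_two_cast (k : ℕ) : (2 * (k.choose 2 : ℕ) : ℤ) = k * (k - 1) := by
  induction k with
  | zero => simp
  | succ k ih =>
    rw [Nat.choose_succ_succ' k 1]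
    push_cast
    simp only [Nat.choose_one_right]
    linear_combination ih

lemma prod_pow_id {R : Type*} [CommRing R] (p : R) (n : ℕ) :
    ∏ i ∈ range n, p ^ i = p ^ (n.choose 2) := by
  induction n with
  | zero => simp
  | succ n ih =>
    rw [prod_range_succ, ih, Nat.choose_succ_succ' n 1, ← pow_add]
    simp [add_comm]

/-- Exponent of the theta series. -/
def te (b c : ℕ) (j : ℤ) : ℕ := (((b + c : ℕ) : ℤ) * j ^ 2 + b * j).toNat

lemma te_cast (b c : ℕ) (j : ℤ) : (te b c j : ℤ) = ((b + c : ℕ) : ℤ) * j ^ 2 + b * j := by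
  apply Int.toNat_of_nonneg
  push_cast
  have h1 : 0 ≤ j ^ 2 + j := by
    rcases le_or_gt 0 j with h | h <;> nlinarith
  nlinarith [mul_nonneg (Int.natCast_nonneg b) h1, mul_nonneg (Int.natCast_nonneg c) (sq_nonneg j)]

lemma te_ge (b c : ℕ) (h : 1 ≤ b + c) (j : ℤ) : |j| ≤ te b c j + 1 := by
  rw [te_cast]
  push_cast
  have h1 : 0 ≤ j ^ 2 + j := by
    rcases le_or_gt 0 j with h | h <;> nlinarith
  have hb : 0 ≤ (b : ℤ) := by positivity
  have hc : 0 ≤ (c : ℤ) := by positivity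
  have h2 : (1 : ℤ) ≤ b + c := by exact_mod_cast h
  have h3 : j ^ 2 ≥ 2 * |j| - 1 := by nlinarith [sq_nonneg (|j| - 1), sq_abs j]
  have h4 := neg_abs_le j
  have h0 := abs_nonneg j
  have h5 : |j| ≤ j ^ 2 := by
    rcases eq_or_ne j 0 with rfl | hj
    · simp
    · have := Int.one_le_abs hj
      nlinarith [sq_abs j]
  rcases Nat.eq_zero_or_pos b with h6 | h6
  · subst h6; simp at *; nlinarith
  · have : (1 : ℤ) ≤ b := by exact_mod_cast h6
    nlinarith [mul_nonneg hc (sq_nonneg j)]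

lemma finite_jtp {R : Type*} [CommRing R] [IsDomain R] (ε : R) (hε : ε * ε = 1) (b c m : ℕ) :
    (∏ i ∈ range (m + 1), ((1 + C ε * X ^ (2 * (b + c) * i + (b + c) + b)) *
      (1 + C ε * X ^ (2 * (b + c) * i + c)) : R⟦X⟧)) =
    ∑ k ∈ range (2 * (m + 1) + 1), C (ε ^ ((m + 1 : ℤ) - k).natAbs) *
      X ^ (te b c ((m + 1 : ℤ) - k)) * gb (X ^ (2 * (b + c))) (2 * (m + 1)) k := by
  set a := b + c with ha
  set p : R⟦X⟧ := X ^ (2 * a) with hp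
  set y : R⟦X⟧ := X ^ (2 * m * a + a + b) with hy
  have hE : (C ε * C ε : R⟦X⟧) = 1 := by rw [← map_mul, hε, map_one]
  have key := qbinom p y (2 * (m + 1)) (C ε)
  have e1 : ∏ i ∈ range (m + 1), (y + C ε * p ^ i) =
      (C ε) ^ (m + 1) * p ^ ((m + 1).choose 2) *
        ∏ i ∈ range (m + 1), (1 + C ε * X ^ (2 * a * i + a + b)) := by
    rw [← prod_pow_id, ← prod_range_reflect (fun i => p ^ i),
      ← prod_range_reflect (fun i => y + C ε * p ^ i)]
    conv_rhs => rw [← card_range (m + 1), ← prod_const, card_range]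
    rw [← prod_mul_distrib, ← prod_mul_distrib]
    apply prod_congr rfl
    intro i hi
    rw [mem_range] at hi
    obtain ⟨d, hd⟩ : ∃ d, m = i + d := ⟨m - i, by omega⟩
    have : m + 1 - 1 - i = d := by omega
    rw [this]
    have h2 : y = p ^ d * X ^ (2 * a * i + a + b) := by
      rw [hp, hy, ← pow_mul, ← pow_add, hd]; congr 1; ring
    rw [h2]
    linear_combination (- p ^ d * X ^ (2 * a * i + a + b)) * hE
  have e2 : ∏ i ∈ range (m + 1), (y + C ε * p ^ (m + 1 + i)) =
      y ^ (m + 1) * ∏ i ∈ range (m + 1), (1 + C ε * X ^ (2 * a * i + c)) := by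
    conv_rhs => rw [← card_range (m + 1), ← prod_const, card_range]
    rw [← prod_mul_distrib]
    apply prod_congr rfl
    intro i hi
    have : p ^ (m + 1 + i) = y * X ^ (2 * a * i + c) := by
      rw [hp, hy, ← pow_mul, ← pow_add]; congr 1; rw [ha]; ring
    rw [this]; ring
  rw [two_mul, prod_range_add, e1, e2, ← two_mul] at key
  have hne : p ^ ((m + 1).choose 2) * y ^ (m + 1) ≠ 0 := by
    rw [hp, hy]; exact mul_ne_zero (pow_ne_zero _ (pow_ne_zero _ X_ne_zero))
      (pow_ne_zero _ (pow_ne_zero _ X_ne_zero))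
  apply mul_left_cancel₀ hne
  have hE2 : (C ε : R⟦X⟧) ^ (m + 1) * C ε ^ (m + 1) = 1 := by
    rw [← mul_pow, hE, one_pow]
  calc _ = C ε ^ (m + 1) * ∑ k ∈ range (2 * (m + 1) + 1), p ^ k.choose 2 * gb p (2 * (m + 1)) k * C ε ^ k * y ^ (2 * (m + 1) - k) := by
        rw [← key, prod_mul_distrib]
        linear_combination (- p ^ ((m + 1).choose 2) * y ^ (m + 1) * (∏ i ∈ range (m + 1), (1 + C ε * X ^ (2 * a * i + a + b)))
          * (∏ i ∈ range (m + 1), (1 + C ε * X ^ (2 * a * i + c)))) * hE2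
    _ = _ := by
        rw [mul_sum, mul_sum]
        apply sum_congr rfl
        intro k hk
        rw [mem_range] at hk
        obtain ⟨l, hl⟩ : ∃ l, 2 * (m + 1) = k + l := ⟨2 * (m + 1) - k, by omega⟩
        have h1 : C ε ^ (m + 1) * C ε ^ k = (C (ε ^ ((m + 1 : ℤ) - k).natAbs) : R⟦X⟧) := by
          rw [map_pow, ← pow_add]
          have hpar : ∃ t, m + 1 + k = ((m + 1 : ℤ) - k).natAbs + 2 * t := by
            rcases le_or_gt k (m + 1) with h | h
            · exact ⟨k, by omega⟩
            · exact ⟨m + 1, by omega⟩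
          obtain ⟨t, ht⟩ := hpar
          rw [ht, pow_add, pow_mul, pow_two, hE, one_pow, mul_one]
        have h2 : p ^ k.choose 2 * y ^ (2 * (m + 1) - k) =
            p ^ ((m + 1).choose 2) * y ^ (m + 1) * X ^ (te b c ((m + 1 : ℤ) - k)) := by
          rw [hp, hy]
          simp only [← pow_mul, ← pow_add]
          congr 1
          have hl' : 2 * (m + 1) - k = l := by omega
          rw [hl']
          have h3 := choose_two_cast k
          have h4 := choose_two_cast (m + 1)
          have h5 : (l : ℤ) = 2 * (m + 1) - k := by omega
          zify
          rw [te_cast, ← ha, h5]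
          push_cast at h3 h4 ⊢
          linear_combination (a : ℤ) * h3 - a * h4
        linear_combination (p ^ k.choose 2 * gb p (2 * (m + 1)) k * y ^ (2 * (m + 1) - k)) * h1 +
          gb p (2 * (m + 1)) k * C (ε ^ ((m + 1 : ℤ) - k).natAbs) * h2

/-- The theta series `∑ ε^j q^((b+c) j^2 + b j)`. -/
noncomputable def theta {R : Type*} [CommRing R] (ε : R) (b c : ℕ) : R⟦X⟧ :=
  PowerSeries.mk fun n => ∑ j ∈ Icc (-((n : ℤ) + 1)) (n + 1),
    if te b c j = n then ε ^ j.natAbs else 0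

lemma coeff_theta {R : Type*} [CommRing R] (ε : R) (b c : ℕ) (h : 1 ≤ b + c) (N : ℕ) (M : ℤ)
    (hM : (N : ℤ) + 1 ≤ M) : coeff N (theta ε b c) =
      ∑ j ∈ Icc (-M) M, if te b c j = N then ε ^ j.natAbs else 0 := by
  rw [theta, coeff_mk]
  apply sum_subset
  · intro j hj
    rw [mem_Icc] at *
    omega
  · intro j _ hj
    rw [if_neg]
    intro he
    apply hj
    have := te_ge b c h j
    rw [he, abs_le] at this
    rw [mem_Icc]
    omega

lemma coeff_eq_of_quot {R : Type*} [CommRing R] (N : ℕ) (f g : R⟦X⟧)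
    (h : Ideal.Quotient.mk (Ideal.span {(X : R⟦X⟧) ^ (N + 1)}) f =
      Ideal.Quotient.mk (Ideal.span {(X : R⟦X⟧) ^ (N + 1)}) g) : coeff N f = coeff N g := by
  rw [Ideal.Quotient.eq, Ideal.mem_span_singleton, X_pow_dvd_iff] at h
  have := h N (by omega)
  rwa [map_sub, sub_eq_zero] at this

lemma jtp_coeff {R : Type*} [CommRing R] [IsDomain R] (ε : R) (hε : ε * ε = 1) (b c : ℕ)
    (h : 1 ≤ b + c) (N m : ℕ) (hm : 2 * N + 2 ≤ m) :
    coeff N (∏ i ∈ range (m + 1), ((1 - X ^ (2 * (b + c) * (i + 1))) *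
      ((1 + C ε * X ^ (2 * (b + c) * i + (b + c) + b)) *
      (1 + C ε * X ^ (2 * (b + c) * i + c))) : R⟦X⟧)) = coeff N (theta ε b c) := by
  rw [prod_mul_distrib, finite_jtp ε hε]
  set p : R⟦X⟧ := X ^ (2 * (b + c)) with hp
  have hq : ∏ i ∈ range (m + 1), (1 - X ^ (2 * (b + c) * (i + 1)) : R⟦X⟧) = qp p (m + 1) := by
    rw [qp, hp]; simp_rw [← pow_mul]
  rw [hq]
  set π := Ideal.Quotient.mk (Ideal.span {(X : R⟦X⟧) ^ (N + 1)}) with hπ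
  have hz : ∀ e, N + 1 ≤ e → π (X ^ e) = 0 := by
    intro e he
    rw [hπ, Ideal.Quotient.eq_zero_iff_mem, Ideal.mem_span_singleton]
    exact pow_dvd_pow _ he
  have hqp : ∀ k, N ≤ k → π (qp p k) = π (qp p N) := by
    intro k hk
    obtain ⟨l, rfl⟩ := Nat.exists_eq_add_of_le hk
    rw [qp, prod_range_add, map_mul]
    have : π (∏ x ∈ range l, (1 - p ^ (N + x + 1))) = 1 := by
      rw [map_prod]
      apply prod_eq_one
      intro i _
      rw [map_sub, map_one, hp, ← pow_mul, hz, sub_zero]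
      nlinarith
    rw [this, mul_one]; rfl
  have hu : IsUnit (π (qp p N)) := by
    apply IsUnit.map
    rw [PowerSeries.isUnit_iff_constantCoeff, qp, map_prod]
    apply IsUnit.prod_iff.mpr
    intro i _
    have : 2 * (b + c) * (i + 1) ≠ 0 := by positivity
    rw [hp, ← pow_mul]
    simp [this]
  have hterm : ∀ k ∈ range (2 * (m + 1) + 1),
      π (qp p (m + 1)) * π (X ^ (te b c ((m + 1 : ℤ) - k)) * gb p (2 * (m + 1)) k) =
      π (X ^ (te b c ((m + 1 : ℤ) - k))) := by
    intro k hk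
    rw [mem_range] at hk
    by_cases he : N + 1 ≤ te b c ((m + 1 : ℤ) - k)
    · rw [map_mul, hz _ he]; simp
    · have h1 := te_ge b c h ((m + 1 : ℤ) - k)
      rw [abs_le] at h1
      have h2 := gb_mul p (2 * (m + 1)) k (2 * (m + 1) - k) (by omega)
      have h3 := congrArg π h2
      rw [map_mul, map_mul, hqp k (by omega), hqp (2 * (m + 1) - k) (by omega),
        hqp (2 * (m + 1)) (by omega)] at h3
      rw [hqp (m + 1) (by omega), map_mul]
      have h4 : π (gb p (2 * (m + 1)) k) * π (qp p N) = 1 := by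
        apply hu.mul_right_cancel
        linear_combination h3
      linear_combination π (X ^ (te b c ((m + 1 : ℤ) - k))) * h4
  have hfin : coeff N (qp p (m + 1) * ∑ k ∈ range (2 * (m + 1) + 1),
      C (ε ^ ((m + 1 : ℤ) - k).natAbs) *
      X ^ (te b c ((m + 1 : ℤ) - k)) * gb p (2 * (m + 1)) k) =
      coeff N (∑ k ∈ range (2 * (m + 1) + 1),
      C (ε ^ ((m + 1 : ℤ) - k).natAbs) * X ^ (te b c ((m + 1 : ℤ) - k))) := by
    apply coeff_eq_of_quot
    rw [map_mul, map_sum, map_sum, mul_sum]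
    apply sum_congr rfl
    intro k hk
    rw [mul_assoc, map_mul, map_mul _ (C _) (X ^ _)]
    linear_combination π (C (ε ^ ((m + 1 : ℤ) - k).natAbs)) * hterm k hk
  rw [hfin, coeff_theta ε b c h N (m + 1) (by omega), map_sum]
  simp_rw [coeff_C_mul, coeff_X_pow]
  refine sum_bij' (fun k _ => (m + 1 : ℤ) - k) (fun j _ => (m + 1 - j).toNat) ?_ ?_ ?_ ?_ ?_
  · intro k hk; rw [mem_range] at hk; rw [mem_Icc]; omega
  · intro j hj; rw [mem_Icc] at hj; rw [mem_range]; omega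
  · intro k hk; omega
  · intro j hj; rw [mem_Icc] at hj; omega
  · intro k hk
    simp only [mul_ite, mul_one, mul_zero, eq_comm]

open scoped PowerSeries.WithPiTopology in
lemma mult_aux {R : Type*} [CommRing R] [TopologicalSpace R] (ε : R) (u v : ℕ) (hu : 1 ≤ u) :
    Multipliable (fun i : ℕ => (1 + C ε * X ^ (u * i + v) : R⟦X⟧)) := by
  nontriviality R
  apply PowerSeries.WithPiTopology.multipliable_one_add_of_tendsto_order_atTop_nhds_top
  refine ENat.tendsto_nhds_top_iff_natCast_lt.mpr (fun n ↦ Filter.eventually_atTop.mpr ⟨n + 1, ?_⟩)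
  intro i hi
  have : ((n + 1 : ℕ) : ℕ∞) ≤ (C ε * X ^ (u * i + v) : R⟦X⟧).order := by
    apply PowerSeries.nat_le_order
    intro k hk
    rw [coeff_C_mul, coeff_X_pow, if_neg, mul_zero]
    nlinarith
  refine lt_of_lt_of_le ?_ this
  exact_mod_cast Nat.lt_succ_self n

open scoped PowerSeries.WithPiTopology in
lemma jtp {R : Type*} [CommRing R] [IsDomain R] [TopologicalSpace R] [DiscreteTopology R]
    (ε : R) (hε : ε * ε = 1) (b c : ℕ) (h : 1 ≤ b + c) :
    theta ε b c = (∏' i : ℕ, (1 + C (-1) * X ^ (2 * (b + c) * i + 2 * (b + c)) : R⟦X⟧)) *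
      ((∏' i : ℕ, (1 + C ε * X ^ (2 * (b + c) * i + (b + c + b)) : R⟦X⟧)) *
      ∏' i : ℕ, (1 + C ε * X ^ (2 * (b + c) * i + c) : R⟦X⟧)) := by
  have m1 := mult_aux (-1 : R) (2 * (b + c)) (2 * (b + c)) (by omega)
  have m2 := mult_aux ε (2 * (b + c)) (b + c + b) (by omega)
  have m3 := mult_aux ε (2 * (b + c)) c (by omega)
  have hp := (m1.hasProd.mul (m2.hasProd.mul m3.hasProd)).tendsto_prod_nat
  have hp' := (Filter.tendsto_add_atTop_iff_nat 1).mpr hp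
  refine tendsto_nhds_unique ?_ hp'
  rw [PowerSeries.WithPiTopology.tendsto_iff_coeff_tendsto]
  intro N
  apply tendsto_const_nhds.congr'
  filter_upwards [Filter.eventually_ge_atTop (2 * N + 2)] with m hm
  rw [← jtp_coeff ε hε b c h N m hm]
  congr 1
  apply prod_congr rfl
  intro i _
  congr 1
  · simp [sub_eq_add_neg, mul_add]
  · rw [add_assoc (2 * (b + c) * i)]

section Products
open scoped PowerSeries.WithPiTopology

/-- Infinite product `∏ (1 + ε q^(u i + v))`. -/
noncomputable def Qp {R : Type*} [CommRing R] [TopologicalSpace R] (ε : R) (u v : ℕ) : R⟦X⟧ :=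
  ∏' i : ℕ, (1 + C ε * X ^ (u * i + v) : R⟦X⟧)

lemma Qp_split {R : Type*} [CommRing R] [TopologicalSpace R] [DiscreteTopology R]
    (ε : R) (u v : ℕ) (hu : 1 ≤ u) : Qp ε u v = Qp ε (2 * u) v * Qp ε (2 * u) (u + v) := by
  have h1 := mult_aux ε (2 * u) v (by omega)
  have h2 := mult_aux ε (2 * u) (u + v) (by omega)
  have := tprod_even_mul_odd (f := fun i : ℕ => (1 + C ε * X ^ (u * i + v) : R⟦X⟧))
    (by convert h1 using 5; ring) (by convert h2 using 5; ring)
  unfold Qp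
  rw [← this]
  congr 1
  · congr 1; ext1 i; congr 3; ring
  · congr 1; ext1 i; congr 3; ring

lemma Qp_diff {R : Type*} [CommRing R] [TopologicalSpace R] [DiscreteTopology R]
    (u v : ℕ) (hu : 1 ≤ u) :
    Qp (-1 : R) u v * Qp 1 u v = Qp (-1) (2 * u) (2 * v) := by
  unfold Qp
  rw [← (mult_aux (-1 : R) u v hu).tprod_mul (mult_aux (1 : R) u v hu)]
  congr 1; ext1 i
  have : (X : R⟦X⟧) ^ (2 * u * i + 2 * v) = X ^ (u * i + v) * X ^ (u * i + v) := by
    rw [← pow_add]; congr 1; ring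
  rw [this]; simp; ring

lemma Qp_shift {R : Type*} [CommRing R] [TopologicalSpace R] [DiscreteTopology R]
    (ε : R) (u v : ℕ) (hu : 1 ≤ u) :
    Qp ε u v = (1 + C ε * X ^ v) * Qp ε u (u + v) := by
  unfold Qp
  rw [tprod_eq_zero_mul']
  · simp only [mul_zero, zero_add]
    congr 2; ext1 i; congr 3; ring
  · convert mult_aux ε u (u + v) hu using 5; ring

/-- Generating series of 4-regular partitions. -/
noncomputable def bser (R : Type*) [CommRing R] : R⟦X⟧ :=
  PowerSeries.mk fun n ↦ (((Nat.Partition.restricted n (¬ 4 ∣ ·)).card : ℕ) : R)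

lemma bser_mul {R : Type*} [CommRing R] [IsDomain R] [TopologicalSpace R] [DiscreteTopology R] :
    bser R * Qp (-1) 1 1 = Qp (-1) 4 4 := by
  unfold bser
  rw [Nat.Partition.powerSeriesMk_card_restricted_eq_powerSeriesMk_card_countRestricted R
    (by norm_num : 0 < 4), Nat.Partition.powerSeriesMk_card_countRestricted_eq_tprod R
    (by norm_num : 0 < 4)]
  unfold Qp
  rw [← (Nat.Partition.multipliable_powerSeriesMk_card_countRestricted R 4).tprod_mul
    (mult_aux (-1 : R) 1 1 le_rfl)]
  congr 1; ext1 i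
  simp_rw [pow_mul]
  have h1 : (X : R⟦X⟧) ^ (4 * i + 4) = (X ^ (i + 1)) ^ 4 := by rw [← pow_mul]; congr 1; ring
  rw [h1]
  simp [Finset.sum_range_succ]; ring

end Products

section Relations

/-- `φ(-q)` mod 3. -/
noncomputable def sX : (ZMod 3)⟦X⟧ := theta (-1) 0 1
/-- `ψ(-q)` mod 3. -/
noncomputable def sY : (ZMod 3)⟦X⟧ := theta (-1) 1 1
/-- `2 * ψ(q^2)` mod 3. -/
noncomputable def sZ : (ZMod 3)⟦X⟧ := theta 1 1 0

instance fact3 : Fact (Nat.Prime 3) := ⟨by norm_num⟩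

lemma prod_relations : bser (ZMod 3) * sX = sY ∧ sX * sZ = 2 * sY ^ 2 := by
  let _ : TopologicalSpace (ZMod 3) := ⊥
  have _ : DiscreteTopology (ZMod 3) := ⟨rfl⟩
  have hX : sX = Qp (-1) 2 2 * (Qp (-1) 2 1 * Qp (-1) 2 1) := jtp (-1) (by ring) 0 1 (by norm_num)
  have hY : sY = Qp (-1) 4 4 * (Qp (-1) 4 3 * Qp (-1) 4 1) := jtp (-1) (by ring) 1 1 (by norm_num)
  have hZ : sZ = Qp (-1) 2 2 * (Qp 1 2 2 * Qp 1 2 0) := jtp 1 (by ring) 1 0 (by norm_num)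
  have h1 : Qp (-1 : ZMod 3) 1 1 = Qp (-1) 2 1 * Qp (-1) 2 2 := Qp_split (-1) 1 1 le_rfl
  have h2 : Qp (-1 : ZMod 3) 2 1 = Qp (-1) 4 1 * Qp (-1) 4 3 := Qp_split (-1) 2 1 (by norm_num)
  have h3 : Qp (-1 : ZMod 3) 2 2 * Qp 1 2 2 = Qp (-1) 4 4 := Qp_diff 2 2 (by norm_num)
  have h4 : Qp (1 : ZMod 3) 2 0 = 2 * Qp 1 2 2 := by
    rw [Qp_shift 1 2 0 (by norm_num)]; simp; left; norm_num
  have h5 := bser_mul (R := ZMod 3)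
  have hY' : sY = Qp (-1) 4 4 * Qp (-1) 2 1 := by rw [hY, h2]; ring
  constructor
  · rw [hX, hY', ← h5, h1]; ring
  · rw [hX, hY', hZ, h4, ← h3]; ring

end Relations

section Counting

lemma expand_three (f : (ZMod 3)⟦X⟧) : PowerSeries.expand 3 (by norm_num) f = f ^ 3 := by
  have h := MvPowerSeries.map_frobenius_expand 3 (by norm_num) (f := f) (R := ZMod 3)
  rw [ZMod.frobenius_zmod] at h
  rw [← h]
  simp [PowerSeries.expand]

lemma coeff_theta_mul (ε ε' : ZMod 3) (b c b' c' : ℕ) (h : 1 ≤ b + c) (h' : 1 ≤ b' + c')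
    (N : ℕ) (M : ℤ) (hM : (N : ℤ) + 1 ≤ M) :
    coeff N (theta ε b c * PowerSeries.expand 3 (by norm_num) (theta ε' b' c')) =
      ∑ x ∈ Icc (-M) M, ∑ y ∈ Icc (-M) M,
        if te b c x + 3 * te b' c' y = N then ε ^ x.natAbs * ε' ^ y.natAbs else 0 := by
  rw [coeff_mul]
  have h1 : ∀ p ∈ antidiagonal N, coeff p.1 (theta ε b c) *
      coeff p.2 (PowerSeries.expand 3 (by norm_num) (theta ε' b' c')) =
      ∑ x ∈ Icc (-M) M, ∑ y ∈ Icc (-M) M,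
        if p = (te b c x, 3 * te b' c' y) then ε ^ x.natAbs * ε' ^ y.natAbs else 0 := by
    rintro ⟨i, j⟩ hp
    rw [HasAntidiagonal.mem_antidiagonal] at hp
    simp only at hp
    have e1 : coeff j (PowerSeries.expand 3 (by norm_num) (theta ε' b' c')) =
        ∑ y ∈ Icc (-M) M, if 3 * te b' c' y = j then ε' ^ y.natAbs else 0 := by
      rw [PowerSeries.coeff_expand]
      split_ifs with hd
      · obtain ⟨k, rfl⟩ := hd
        rw [Nat.mul_div_cancel_left _ (by norm_num), coeff_theta ε' b' c' h' k M (by omega)]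
        apply sum_congr rfl
        intro y _
        simp
      · symm
        apply sum_eq_zero
        intro y _
        rw [if_neg]
        rintro rfl
        exact hd (dvd_mul_right _ _)
    rw [e1, coeff_theta ε b c h i M (by omega), sum_mul_sum]
    apply sum_congr rfl; intro x _
    apply sum_congr rfl; intro y _
    simp only [Prod.mk.injEq]
    by_cases g1 : te b c x = i <;> by_cases g2 : 3 * te b' c' y = j <;>
      simp [g1, g2, eq_comm] <;> grind
  rw [sum_congr rfl h1, sum_comm]
  apply sum_congr rfl; intro x _
  rw [sum_comm]
  apply sum_congr rfl; intro y _
  rw [sum_ite_eq']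
  simp [HasAntidiagonal.mem_antidiagonal]

lemma eis_card (n : ℕ) (hn : 0 < n) (E : Finset (ℤ × ℤ))
    (hE : ∀ z, z ∈ E ↔ z.1 ^ 2 + z.1 * z.2 + z.2 ^ 2 = n) : 3 ∣ E.card := by
  classical
  let f : Function.End E := fun z => ⟨(-z.1.1 - z.1.2, z.1.1), by
    have := (hE _).1 z.2
    rw [hE]; simp only; linear_combination this⟩
  have hf : f ^ 3 ^ 1 = 1 := by
    funext z
    apply Subtype.ext
    apply Prod.ext
    · change (f (f (f z))).1.1 = z.1.1
      simp only [f]; ring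
    · change (f (f (f z))).1.2 = z.1.2
      simp only [f]; ring
  have h := Equiv.Perm.card_fixedPoints_modEq hf
  have h0 : Fintype.card f.fixedPoints = 0 := by
    rw [Fintype.card_eq_zero_iff]
    constructor
    rintro ⟨z, hz⟩
    have hz' : f z = z := hz
    have a1 : -z.1.1 - z.1.2 = z.1.1 := congrArg (fun w : E => w.1.1) hz'
    have a2 : z.1.1 = z.1.2 := congrArg (fun w : E => w.1.2) hz'
    have := (hE _).1 z.2
    have a3 : z.1.1 = 0 := by omega
    have a4 : z.1.2 = 0 := by omega
    rw [a3, a4] at this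
    simp at this
    omega
  rw [h0] at h
  rw [← Nat.modEq_zero_iff_dvd]
  simpa using h

lemma int_abs_le_sq (t : ℤ) : |t| ≤ t ^ 2 := by
  rcases eq_or_ne t 0 with rfl | hj
  · simp
  · have := Int.one_le_abs hj
    nlinarith [sq_abs t]

lemma theta_count (N : ℕ) :
    coeff (N + 1) (sX * PowerSeries.expand 3 (by norm_num) sX) =
    coeff N (sZ * PowerSeries.expand 3 (by norm_num) sZ) := by
  rw [sX, sZ, coeff_theta_mul _ _ _ _ _ _ (by norm_num) (by norm_num) (N + 1) (N + 2) (by push_cast; linarith),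
    coeff_theta_mul _ _ _ _ _ _ (by norm_num) (by norm_num) N (N + 2) (by linarith)]
  simp only [one_pow, mul_one]
  set I : Finset ℤ := Icc (-((N : ℤ) + 2)) (N + 2) with hI
  rw [← sum_product', ← sum_product', ← sum_filter, ← sum_filter]
  set A := (I ×ˢ I).filter (fun z : ℤ × ℤ => te 0 1 z.1 + 3 * te 0 1 z.2 = N + 1) with hA
  set B := (I ×ˢ I).filter (fun z : ℤ × ℤ => te 1 0 z.1 + 3 * te 1 0 z.2 = N) with hB
  set J : Finset ℤ := Icc (-(2 * (N : ℤ) + 2)) (2 * N + 2) with hJ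
  set E := (J ×ˢ J).filter (fun z : ℤ × ℤ => z.1 ^ 2 + z.1 * z.2 + z.2 ^ 2 = (N + 1 : ℕ)) with hE
  have mA : ∀ z, z ∈ A ↔ z.1 ^ 2 + 3 * z.2 ^ 2 = (N : ℤ) + 1 := by
    intro z
    have e : te 0 1 z.1 + 3 * te 0 1 z.2 = N + 1 ↔ z.1 ^ 2 + 3 * z.2 ^ 2 = (N : ℤ) + 1 := by
      zify; rw [te_cast, te_cast]; push_cast; simp
    rw [hA, mem_filter, e, mem_product, hI, mem_Icc, mem_Icc, ← abs_le, ← abs_le]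
    refine ⟨fun h => h.2, fun h => ⟨⟨?_, ?_⟩, h⟩⟩
    · nlinarith [int_abs_le_sq z.1, sq_nonneg z.2]
    · nlinarith [int_abs_le_sq z.2, sq_nonneg z.1, sq_nonneg z.2]
  have mB : ∀ z, z ∈ B ↔ z.1 ^ 2 + z.1 + 3 * (z.2 ^ 2 + z.2) = (N : ℤ) := by
    intro z
    have e : te 1 0 z.1 + 3 * te 1 0 z.2 = N ↔ z.1 ^ 2 + z.1 + 3 * (z.2 ^ 2 + z.2) = (N : ℤ) := by
      zify; rw [te_cast, te_cast]; push_cast; simp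
    have g1 := te_ge 1 0 (by norm_num) z.1
    have g2 := te_ge 1 0 (by norm_num) z.2
    rw [hB, mem_filter, mem_product, hI, mem_Icc, mem_Icc, ← abs_le, ← abs_le]
    refine ⟨fun h => e.1 h.2, fun h => ⟨⟨?_, ?_⟩, e.2 h⟩⟩
    · have := e.2 h; omega
    · have := e.2 h; omega
  have mE : ∀ z, z ∈ E ↔ z.1 ^ 2 + z.1 * z.2 + z.2 ^ 2 = (N + 1 : ℕ) := by
    intro z
    rw [hE, mem_filter, mem_product, hJ, mem_Icc, mem_Icc, ← abs_le, ← abs_le]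
    refine ⟨fun h => h.2, fun h => ⟨⟨?_, ?_⟩, h⟩⟩
    · push_cast at h; nlinarith [int_abs_le_sq z.1, sq_nonneg (z.1 + 2 * z.2), sq_nonneg z.1]
    · push_cast at h; nlinarith [int_abs_le_sq z.2, sq_nonneg (z.2 + 2 * z.1), sq_nonneg z.2]
  have h3 := eis_card (N + 1) (by omega) E mE
  have hAc : A.card = (E.filter (fun z => z.2 % 2 = 0)).card := by
    refine card_bij' (fun z _ => (z.1 - z.2, 2 * z.2)) (fun z _ => (z.1 + z.2 / 2, z.2 / 2)) ?_ ?_ ?_ ?_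
    · intro z hz
      rw [mA] at hz
      rw [mem_filter, mE]
      refine ⟨?_, by simp⟩
      push_cast; linear_combination hz
    · intro z hz
      rw [mem_filter, mE] at hz
      rw [mA]
      obtain ⟨hz, h2⟩ := hz
      obtain ⟨y, hy⟩ : ∃ y, z.2 = 2 * y := ⟨z.2 / 2, by omega⟩
      rw [hy] at hz ⊢
      simp only [Int.mul_ediv_cancel_left y (by norm_num : (2 : ℤ) ≠ 0)]
      push_cast at hz; linear_combination hz
    · rintro ⟨x, y⟩ _; ext <;> simp
    · rintro ⟨x, y⟩ hz
      rw [mem_filter] at hz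
      have := hz.2
      simp only at this
      ext <;> simp only <;> omega
  have hBc : B.card = (E.filter (fun z => ¬ z.2 % 2 = 0)).card := by
    refine card_bij' (fun z _ => (z.1 - z.2, 2 * z.2 + 1)) (fun z _ => (z.1 + z.2 / 2, z.2 / 2)) ?_ ?_ ?_ ?_
    · intro z hz
      rw [mB] at hz
      rw [mem_filter, mE]
      refine ⟨?_, by simp⟩
      push_cast; linear_combination hz
    · intro z hz
      rw [mem_filter, mE] at hz
      rw [mB]
      obtain ⟨hz, h2⟩ := hz
      obtain ⟨y, hy⟩ : ∃ y, z.2 = 2 * y + 1 := ⟨z.2 / 2, by omega⟩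
      have hy2 : (2 * y + 1) / 2 = y := by omega
      rw [hy] at hz ⊢
      simp only [hy2]
      push_cast at hz; linear_combination hz
    · rintro ⟨x, y⟩ _; ext <;> simp only <;> omega
    · rintro ⟨x, y⟩ hz
      rw [mem_filter] at hz
      have := hz.2
      simp only at this
      ext <;> simp only <;> omega
  have hsum : A.card + B.card = E.card := by
    rw [hAc, hBc]; exact card_filter_add_card_filter_not _
  have hz3 : (A.card : ZMod 3) + B.card = 0 := by
    rw [← Nat.cast_add, hsum]
    exact (ZMod.natCast_eq_zero_iff _ _).2 h3
  have hs : ∀ z ∈ A, (-1 : ZMod 3) ^ z.1.natAbs * (-1) ^ z.2.natAbs = (-1) ^ (N + 1) := by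
    intro z hz
    rw [mA] at hz
    rw [← pow_add]
    apply neg_one_pow_congr
    have e1 : (Even (z.1.natAbs + z.2.natAbs)) ↔ Even (z.1 + z.2) := by
      rw [Nat.even_add, Int.natAbs_even, Int.natAbs_even, Int.even_add]
    have e2 : Even (N + 1) ↔ Even ((N : ℤ) + 1) := by
      rw [← Int.even_coe_nat]; push_cast; rfl
    rw [e1, e2, ← hz]
    have : ¬ Even (3 : ℤ) := by decide
    simp [Int.even_add, Int.even_mul, Int.even_pow, this]
  rw [sum_congr rfl hs, sum_const, sum_const, nsmul_eq_mul, nsmul_eq_mul, mul_one]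
  have h30 : (3 : ZMod 3) = 0 := rfl
  rcases Nat.even_or_odd N with hN | hN
  · rw [hN.add_one.neg_one_pow]
    linear_combination - hz3
  · have hB0 : B = ∅ := by
      rw [eq_empty_iff_forall_notMem]
      intro z hz
      rw [mB] at hz
      have a1 := Int.even_mul_succ_self z.1
      have a2 := Int.even_mul_succ_self z.2
      obtain ⟨r, hr⟩ := a1
      obtain ⟨s, hs⟩ := a2
      obtain ⟨t, ht⟩ := hN
      have : (N : ℤ) = (r + r) + 3 * (s + s) := by rw [← hz, ← hr, ← hs]; ring
      omega
    rw [hB0] at hz3 ⊢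
    rw [hN.add_one.neg_one_pow]
    simpa using hz3

lemma const_sX : constantCoeff sX = 1 := by
  rw [← coeff_zero_eq_constantCoeff_apply, sX, theta, coeff_mk]
  decide

lemma main_rel : sX ^ 4 * (sX ^ 4 - 1) = X * sY ^ 8 := by
  have h1 : sX ^ 4 - 1 = X * sZ ^ 4 := by
    have : sX * PowerSeries.expand 3 (by norm_num) sX =
        1 + X * (sZ * PowerSeries.expand 3 (by norm_num) sZ) := by
      ext n
      rcases n with _ | N
      · simp [const_sX]
      · rw [theta_count, map_add, coeff_succ_X_mul]
        simp [coeff_one]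
    rw [expand_three, expand_three] at this
    linear_combination this
  have h2 := prod_relations.2
  have h3 : (3 : (ZMod 3)⟦X⟧) = 0 := by
    have : (3 : ZMod 3) = 0 := rfl
    calc (3 : (ZMod 3)⟦X⟧) = C 3 := (map_ofNat C 3).symm
      _ = 0 := by rw [this, map_zero]
  rw [h1]
  have h4 : (sX * sZ) ^ 4 = (2 * sY ^ 2) ^ 4 := by rw [h2]
  linear_combination X * h4 + 5 * X * sY ^ 8 * h3

end Counting

section Dissection

lemma three_eq_zero_ps : (3 : (ZMod 3)⟦X⟧) = 0 := by
  have : (3 : ZMod 3) = 0 := rfl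
  calc (3 : (ZMod 3)⟦X⟧) = C 3 := (map_ofNat C 3).symm
    _ = 0 := by rw [this, map_zero]

lemma coeff_theta_set {R : Type*} [CommRing R] (ε : R) (b c : ℕ) (h : 1 ≤ b + c) (N : ℕ) :
    ∃ S : Finset ℤ, (∀ j, j ∈ S ↔ te b c j = N) ∧
      coeff N (theta ε b c) = ∑ j ∈ S, ε ^ j.natAbs := by
  refine ⟨(Icc (-((N : ℤ) + 1)) (N + 1)).filter (fun j => te b c j = N), ?_, ?_⟩
  · intro j
    rw [mem_filter, mem_Icc]
    refine ⟨fun h => h.2, fun he => ⟨?_, he⟩⟩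
    have := te_ge b c h j
    rw [he, abs_le] at this
    exact this
  · rw [coeff_theta ε b c h N (N + 1) le_rfl, sum_filter]

lemma coeff_theta_zero {R : Type*} [CommRing R] (ε : R) (b c : ℕ) (h : 1 ≤ b + c) (N : ℕ)
    (hN : ∀ j, te b c j ≠ N) : coeff N (theta ε b c) = 0 := by
  obtain ⟨S, hS, e⟩ := coeff_theta_set ε b c h N
  rw [e]
  apply sum_eq_zero
  intro j hj
  exact absurd ((hS j).1 hj) (hN j)

lemma coeff_pow_nine (f : (ZMod 3)⟦X⟧) (n : ℕ) :
    coeff n (f ^ 9) = if 9 ∣ n then coeff (n / 9) f else 0 := by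
  have : f ^ 9 = PowerSeries.expand 3 (by norm_num) (PowerSeries.expand 3 (by norm_num) f) := by
    rw [expand_three, expand_three]; ring
  rw [this, PowerSeries.coeff_expand, PowerSeries.coeff_expand, Nat.div_div_eq_div_mul]
  by_cases h9 : 9 ∣ n
  · rw [if_pos h9, if_pos (by omega), if_pos (by omega)]
  · rw [if_neg h9]
    by_cases h3 : 3 ∣ n
    · rw [if_pos h3, if_neg (by omega)]
    · rw [if_neg h3]

lemma exists_expand (f : (ZMod 3)⟦X⟧) (r : ℕ) (hr : r < 3)
    (h : ∀ n, n % 3 ≠ r → coeff n f = 0) :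
    ∃ g : (ZMod 3)⟦X⟧, f = X ^ r * PowerSeries.expand 3 (by norm_num) g := by
  refine ⟨PowerSeries.mk fun k => coeff (3 * k + r) f, ?_⟩
  ext n
  rw [coeff_X_pow_mul', PowerSeries.coeff_expand]
  by_cases hn : n % 3 = r
  · rw [if_pos (by omega), if_pos (by omega), coeff_mk]
    congr 1; congr 1; omega
  · rw [h n hn]
    split_ifs
    · omega
    · rfl
    · rfl

lemma sX_dissect : ∃ g : (ZMod 3)⟦X⟧,
    sX - sX ^ 9 = X ^ 1 * PowerSeries.expand 3 (by norm_num) g := by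
  apply exists_expand _ _ (by norm_num)
  intro n hn
  have hte : ∀ j N, te 0 1 j = N ↔ j ^ 2 = (N : ℤ) := by
    intro j N; zify; rw [te_cast]; simp
  rw [map_sub, coeff_pow_nine, sub_eq_zero]
  have hmod : ∀ j : ℤ, j ^ 2 = n → 9 ∣ n ∧ ∃ i, j = 3 * i := by
    intro j hj
    obtain ⟨i, hi | hi | hi⟩ : ∃ i, j = 3 * i ∨ j = 3 * i + 1 ∨ j = 3 * i + 2 := ⟨j / 3, by omega⟩
    · refine ⟨?_, i, hi⟩
      zify
      rw [← hj, hi]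
      exact ⟨i ^ 2, by ring⟩
    · exfalso; apply hn; zify; rw [← hj, hi]
      have : (3 * i + 1) ^ 2 = 3 * (3 * i ^ 2 + 2 * i) + 1 := by ring
      omega
    · exfalso; apply hn; zify; rw [← hj, hi]
      have : (3 * i + 2) ^ 2 = 3 * (3 * i ^ 2 + 4 * i + 1) + 1 := by ring
      omega
  split_ifs with h9
  · obtain ⟨k, rfl⟩ := h9
    rw [Nat.mul_div_cancel_left _ (by norm_num)]
    obtain ⟨S, hS, eS⟩ := coeff_theta_set (-1 : ZMod 3) 0 1 (by norm_num) (9 * k)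
    obtain ⟨T, hT, eT⟩ := coeff_theta_set (-1 : ZMod 3) 0 1 (by norm_num) k
    rw [sX, eS, eT]
    refine sum_bij' (fun j _ => j / 3) (fun i _ => 3 * i) ?_ ?_ ?_ ?_ ?_
    · intro j hj
      rw [hS, hte] at hj
      obtain ⟨_, i, rfl⟩ := hmod j hj
      rw [hT, hte, Int.mul_ediv_cancel_left _ (by norm_num)]
      push_cast at hj; linarith
    · intro i hi
      rw [hT, hte] at hi
      rw [hS, hte]
      push_cast; linear_combination 9 * hi
    · intro j hj
      rw [hS, hte] at hj
      obtain ⟨_, i, rfl⟩ := hmod j hj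
      omega
    · intro i _
      omega
    · intro j hj
      rw [hS, hte] at hj
      obtain ⟨_, i, rfl⟩ := hmod j hj
      rw [Int.mul_ediv_cancel_left _ (by norm_num), Int.natAbs_mul]
      simp [pow_mul]
  · apply coeff_theta_zero _ _ _ (by norm_num)
    intro j hj
    rw [hte] at hj
    exact h9 (hmod j hj).1

lemma sY_dissect : ∃ g : (ZMod 3)⟦X⟧,
    sY + X * sY ^ 9 = X ^ 0 * PowerSeries.expand 3 (by norm_num) g := by
  apply exists_expand _ _ (by norm_num)
  intro n hn
  have hte : ∀ j N, te 1 1 j = N ↔ 2 * j ^ 2 + j = (N : ℤ) := by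
    intro j N; zify; rw [te_cast]; simp
  have hmod : ∀ j : ℤ, 2 * j ^ 2 + j = n → ∃ k i, n = 9 * k + 1 ∧ j = -3 * i - 1 ∧
      2 * i ^ 2 + i = (k : ℤ) := by
    intro j hj
    obtain ⟨i, hi | hi | hi⟩ : ∃ i, j = -3 * i ∨ j = -3 * i + 1 ∨ j = -3 * i - 1 :=
      ⟨-((j + 1) / 3), by omega⟩
    · exfalso; apply hn; zify; rw [← hj, hi]
      have : 2 * (-3 * i) ^ 2 + -3 * i = 3 * (6 * i ^ 2 - i) := by ring
      omega
    · exfalso; apply hn; zify; rw [← hj, hi]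
      have : 2 * (-3 * i + 1) ^ 2 + (-3 * i + 1) = 3 * (6 * i ^ 2 - 5 * i + 1) := by ring
      omega
    · refine ⟨te 1 1 i, i, ?_, hi, ((hte i _).1 rfl)⟩
      zify
      rw [← hj, ← (hte i _).1 rfl, hi]; ring
  rcases n with _ | n
  · simp at hn
  rw [map_add, coeff_succ_X_mul, coeff_pow_nine]
  split_ifs with h9
  · obtain ⟨k, rfl⟩ := h9
    rw [Nat.mul_div_cancel_left _ (by norm_num)]
    obtain ⟨S, hS, eS⟩ := coeff_theta_set (-1 : ZMod 3) 1 1 (by norm_num) (9 * k + 1)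
    obtain ⟨T, hT, eT⟩ := coeff_theta_set (-1 : ZMod 3) 1 1 (by norm_num) k
    rw [sY, eS, eT, ← eq_neg_iff_add_eq_zero, ← sum_neg_distrib]
    refine sum_bij' (fun j _ => -((j + 1) / 3)) (fun i _ => -3 * i - 1) ?_ ?_ ?_ ?_ ?_
    · intro j hj
      rw [hS, hte] at hj
      obtain ⟨k', i, h1, rfl, h2⟩ := hmod j hj
      obtain rfl : k = k' := by omega
      have : -((-3 * i - 1 + 1) / 3) = i := by omega
      rw [hT, hte, this, h2]
    · intro i hi
      rw [hT, hte] at hi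
      rw [hS, hte]
      push_cast; linear_combination 9 * hi
    · intro j hj
      rw [hS, hte] at hj
      obtain ⟨k', i, h1, rfl, h2⟩ := hmod j hj
      omega
    · intro i _
      omega
    · intro j hj
      rw [hS, hte] at hj
      obtain ⟨k', i, h1, rfl, h2⟩ := hmod j hj
      have : -((-3 * i - 1 + 1) / 3) = i := by omega
      rw [this]
      have h4 : -(-1 : ZMod 3) ^ i.natAbs = (-1) ^ (i.natAbs + 1) := by ring
      rw [h4]
      apply neg_one_pow_congr
      rw [Nat.even_add_one, Int.natAbs_even, Int.natAbs_even, Int.even_iff, Int.even_iff]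
      omega
  · rw [add_zero]
    apply coeff_theta_zero _ _ _ (by norm_num)
    intro j hj
    rw [hte] at hj
    obtain ⟨k, i, h1, _⟩ := hmod j hj
    omega

lemma coeff_bser (k : ℕ) : coeff (3 * k + 1) (bser (ZMod 3)) =
    coeff k (sX * PowerSeries.expand 3 (by norm_num) sY) := by
  obtain ⟨O, hO⟩ := sX_dissect
  obtain ⟨A, hA⟩ := sY_dissect
  have h3 := three_eq_zero_ps
  have hr := main_rel
  have hb := prod_relations.1
  obtain ⟨U, hU⟩ : ∃ U, sX * U = 1 := by
    have : IsUnit sX := by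
      rw [PowerSeries.isUnit_iff_constantCoeff, const_sX]; exact isUnit_one
    exact this.exists_right_inv
  rw [pow_zero, one_mul, expand_three] at hA
  rw [pow_one, expand_three] at hO
  have hc : 2 * A ^ 3 * O ^ 3 * sX ^ 9 - sY ^ 9 * sX ^ 18 = sY ^ 9 * sX ^ 6 := by
    apply mul_left_cancel₀ (X_ne_zero (R := ZMod 3))
    have e : 2 * A ^ 3 * (X * O ^ 3) * sX ^ 9 - X * sY ^ 9 * sX ^ 18 - X * sY ^ 9 * sX ^ 6 = 0 := by
      rw [← hA, ← hO]
      linear_combination (-(sY * (2 * (sX ^ 10 - sX ^ 18) - sX ^ 18 - sX ^ 6))) * hr +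
        sY * sX ^ 10 * (1 - sX ^ 4 + sX ^ 12 - sX ^ 16) * h3
    linear_combination e
  set c0 := U * (A * sX ^ 6 - X * O ^ 2 * sY ^ 3) with hc0
  set c2 := U * (A * O ^ 2 - 2 * sY ^ 3 * sX ^ 3 * O) with hc2
  have e3 : ∀ f : (ZMod 3)⟦X⟧, f ^ 3 = PowerSeries.expand 3 (by norm_num) f :=
    fun f => (expand_three f).symm
  have key : bser (ZMod 3) = X * (sX * PowerSeries.expand 3 (by norm_num) sY) ^ 3 + c0 ^ 3 +
      X ^ 2 * c2 ^ 3 := by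
    have hc0' : c0 ^ 3 = U ^ 3 * (A ^ 3 * sX ^ 18 - X ^ 3 * (O ^ 3) ^ 2 * sY ^ 9) := by
      rw [hc0, mul_pow]
      linear_combination U ^ 3 * (- (A * sX ^ 6) ^ 2 * (X * O ^ 2 * sY ^ 3) + (A * sX ^ 6) * (X * O ^ 2 * sY ^ 3) ^ 2) * h3
    have hc2' : c2 ^ 3 = U ^ 3 * (A ^ 3 * (O ^ 3) ^ 2 - 2 * sY ^ 9 * sX ^ 9 * O ^ 3) := by
      rw [hc2, mul_pow]
      linear_combination U ^ 3 * (- (A * O ^ 2) ^ 2 * (2 * sY ^ 3 * sX ^ 3 * O) + (A * O ^ 2) * (2 * sY ^ 3 * sX ^ 3 * O) ^ 2 - 2 * sY ^ 9 * sX ^ 9 * O ^ 3) * h3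
    have hbU : bser (ZMod 3) = sY * sX ^ 2 * U ^ 3 := by
      have hU3 : sX ^ 3 * U ^ 3 = 1 := by rw [← mul_pow, hU, one_pow]
      rw [← hb]; linear_combination (- bser (ZMod 3)) * hU3
    have hU3 : sX ^ 3 * U ^ 3 = 1 := by rw [← mul_pow, hU, one_pow]
    have hid : sY * sX ^ 2 = X * (sY ^ 9 * sX ^ 6) + (A ^ 3 * sX ^ 18 - X ^ 3 * (O ^ 3) ^ 2 * sY ^ 9) +
        X ^ 2 * (A ^ 3 * (O ^ 3) ^ 2 - 2 * sY ^ 9 * sX ^ 9 * O ^ 3) := by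
      linear_combination sX ^ 2 * hA + (A ^ 3 - X * sY ^ 9) * (sX + sX ^ 9 + X * O ^ 3) * hO + X * hc
    rw [hbU, hc0', hc2', hid, expand_three]
    linear_combination X * sY ^ 9 * sX ^ 3 * hU3
  rw [key, e3, e3 c0, e3 c2, map_add, map_add]
  rw [coeff_succ_X_mul, PowerSeries.coeff_expand_mul,
    PowerSeries.coeff_expand_of_not_dvd 3 (by norm_num) c0 (by omega), coeff_X_pow_mul']
  split_ifs with h
  · rw [PowerSeries.coeff_expand_of_not_dvd 3 (by norm_num) c2 (by omega)]; simp
  · simp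

lemma no_rep (n α : ℕ) : ∀ j w : ℤ, 8 * j ^ 2 + 3 * w ^ 2 ≠ 9 ^ α * (24 * n + 19) := by
  have hsq : ∀ j : ℤ, j ^ 2 % 3 = 0 → ∃ i, j = 3 * i := by
    intro j hj
    have h : (3 : ℤ) ∣ j ^ 2 := Int.dvd_of_emod_eq_zero hj
    exact Int.prime_three.dvd_of_dvd_pow h
  have hsq1 : ∀ j : ℤ, j ^ 2 % 3 = 0 ∨ j ^ 2 % 3 = 1 := by
    intro j
    obtain ⟨i, hi | hi | hi⟩ : ∃ i, j = 3 * i ∨ j = 3 * i + 1 ∨ j = 3 * i + 2 := ⟨j / 3, by omega⟩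
    · left; rw [hi]; have : (3 * i) ^ 2 = 3 * (3 * i ^ 2) := by ring
      omega
    · right; rw [hi]; have : (3 * i + 1) ^ 2 = 3 * (3 * i ^ 2 + 2 * i) + 1 := by ring
      omega
    · right; rw [hi]; have : (3 * i + 2) ^ 2 = 3 * (3 * i ^ 2 + 4 * i + 1) + 1 := by ring
      omega
  induction α with
  | zero =>
    intro j w h
    have := hsq1 j
    omega
  | succ α ih =>
    intro j w h
    rw [pow_succ (9 : ℤ) α] at h
    obtain ⟨i, rfl⟩ := hsq j (by
      have : (9 : ℤ) ^ α * 9 * (24 * n + 19) = 3 * (3 * 9 ^ α * (24 * n + 19)) := by ring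
      omega)
    obtain ⟨v, rfl⟩ := hsq w (by
      have : (9 : ℤ) ^ α * 9 * (24 * n + 19) = 9 * (9 ^ α * (24 * n + 19)) := by ring
      have : (3 * i) ^ 2 = 9 * i ^ 2 := by ring
      omega)
    exact ih i v (by linarith)

lemma coeff_zero_final (n α k : ℕ) (hk : 8 * k + 3 = 9 ^ α * (24 * n + 19)) :
    coeff k (sX * PowerSeries.expand 3 (by norm_num) sY) = 0 := by
  rw [sX, sY, coeff_theta_mul _ _ _ _ _ _ (by norm_num) (by norm_num) k (k + 1) le_rfl]
  apply sum_eq_zero; intro x _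
  apply sum_eq_zero; intro y _
  rw [if_neg]
  intro h
  zify at h hk
  rw [te_cast, te_cast] at h
  push_cast at h
  apply no_rep n α x (4 * y + 1)
  rw [← hk, ← h]; ring

end Dissection

section Final

lemma Tcount_cast (m : ℕ) : (Tcount 4 3 m : ZMod 3) = coeff m ((bser (ZMod 3)) ^ 3) := by
  classical
  let S : Finset (Σ l : Fin 3 → ℕ, ∀ i, Nat.Partition (l i)) :=
    (piAntidiag univ m).sigma
      (fun l => Fintype.piFinset fun i => Nat.Partition.restricted (l i) (¬ 4 ∣ ·))
  let e : (Fin 3 → Σ m : ℕ, Nat.Partition m) ≃ Σ l : Fin 3 → ℕ, ∀ i, Nat.Partition (l i) :=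
    { toFun := fun f => ⟨fun i => (f i).1, fun i => (f i).2⟩
      invFun := fun x i => ⟨x.1 i, x.2 i⟩
      left_inv := fun _ => rfl
      right_inv := fun _ => rfl }
  have h1 : Tcount 4 3 m = S.card := by
    have hS : S.card = Nat.card {x // x ∈ S} := by simp
    rw [Tcount, hS]
    apply Nat.card_congr
    refine e.subtypeEquiv ?_
    intro f
    simp [S, e, mem_piAntidiag, Nat.Partition.restricted]
  rw [h1]
  have h2 : bser (ZMod 3) ^ 3 = ∏ _i : Fin 3, bser (ZMod 3) := by simp
  rw [h2, PowerSeries.coeff_prod, card_sigma]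
  push_cast
  refine sum_bij' (fun l _ => Finsupp.equivFunOnFinite.symm l) (fun l _ => ⇑l) ?_ ?_ ?_ ?_ ?_
  · intro l hl
    simpa [mem_piAntidiag, mem_finsuppAntidiag] using hl
  · intro l hl
    simpa [mem_piAntidiag, mem_finsuppAntidiag] using hl
  · intro l _; rfl
  · intro l _; ext i; rfl
  · intro l _
    simp [bser, Fintype.card_piFinset]

end Final

theorem stmt10 (n α : ℕ) :
    3 ∣ Tcount 4 3 (3 ^ (2 * α + 3) * n + (19 * 3 ^ (2 * α + 2) - 3) / 8) := by
  rw [← ZMod.natCast_eq_zero_iff, Tcount_cast, ← expand_three]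
  have h8 : 9 ^ α % 8 = 1 := by
    rw [Nat.pow_mod]; simp
  obtain ⟨t, ht⟩ : ∃ t, 9 ^ α = 8 * t + 1 := ⟨9 ^ α / 8, by omega⟩
  obtain ⟨k, hk⟩ : ∃ k, 8 * k + 3 = 9 ^ α * (24 * n + 19) := by
    refine ⟨t * (24 * n + 19) + 3 * n + 2, ?_⟩
    rw [ht]; ring
  have harg : 3 ^ (2 * α + 3) * n + (19 * 3 ^ (2 * α + 2) - 3) / 8 = 3 * (3 * k + 1) := by
    have e1 : 3 ^ (2 * α + 3) = 27 * 9 ^ α := by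
      rw [pow_add, pow_mul]; norm_num; ring
    have e2 : 3 ^ (2 * α + 2) = 9 * 9 ^ α := by
      rw [pow_add, pow_mul]; norm_num; ring
    have e3 : 8 * k + 3 = 24 * (9 ^ α * n) + 19 * 9 ^ α := by rw [hk]; ring
    rw [e1, e2, mul_assoc]
    omega
  rw [harg, PowerSeries.coeff_expand_mul, coeff_bser]
  exact coeff_zero_final n α k hk
end

section
/- For all n ≥ 0 and α ≥ 0, T_4(27·5^{2α} n + (171·5^{2α} − 3)/8) ≡ 0 (mod 3). -/
open PowerSeries in
/-- Theta-like series: the sum of `w i * X ^ (e i)` over all indices `i`. -/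
noncomputable def Th {ι : Type} (e : ι → ℤ) (w : ι → ZMod 3) : PowerSeries (ZMod 3) :=
  PowerSeries.mk fun n => ∑ᶠ i, if e i = (n : ℤ) then w i else 0

def FinFib {ι : Type} (e : ι → ℤ) : Prop := (∀ i, 0 ≤ e i) ∧ ∀ n : ℤ, {i | e i ≤ n}.Finite

lemma coeff_Th {ι : Type} (e : ι → ℤ) (w : ι → ZMod 3) (n : ℕ) :
    (Th e w).coeff n = ∑ᶠ i, if e i = (n : ℤ) then w i else 0 := by
  simp [Th]

lemma Th_equiv {ι κ : Type} (σ : κ ≃ ι) (e : ι → ℤ) (w : ι → ZMod 3) (e' : κ → ℤ)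
    (w' : κ → ZMod 3) (he : ∀ k, e' k = e (σ k)) (hw : ∀ k, w' k = w (σ k)) :
    Th e w = Th e' w' := by
  ext n
  rw [coeff_Th, coeff_Th, ← finsum_comp_equiv σ]
  simp [he, hw]

lemma coeff_Th_finset {ι : Type} (e : ι → ℤ) (w : ι → ZMod 3) (n : ℕ) (s : Finset ι)
    (hs : ∀ i, e i = n → i ∈ s) :
    (Th e w).coeff n = ∑ i ∈ s, if e i = (n : ℤ) then w i else 0 := by
  rw [coeff_Th]
  apply finsum_eq_sum_of_support_subset
  intro i hi
  apply hs
  by_contra h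
  simp [h] at hi

lemma FinFib.prod {ι κ : Type} {e : ι → ℤ} {e' : κ → ℤ} (h : FinFib e) (h' : FinFib e') :
    FinFib (fun p : ι × κ => e p.1 + e' p.2) := by
  refine ⟨fun p => add_nonneg (h.1 _) (h'.1 _), fun n => ?_⟩
  apply ((h.2 n).prod (h'.2 n)).subset
  rintro ⟨i, j⟩ hij
  have := h.1 i
  have := h'.1 j
  simp only [Set.mem_ofPred_eq] at hij
  simp only [Set.mem_prod, Set.mem_ofPred_eq]
  constructor <;> linarith

lemma Th_mul {ι κ : Type} {e : ι → ℤ} {e' : κ → ℤ} (h : FinFib e) (h' : FinFib e')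
    (w : ι → ZMod 3) (w' : κ → ZMod 3) :
    Th e w * Th e' w' = Th (fun p : ι × κ => e p.1 + e' p.2) (fun p => w p.1 * w' p.2) := by
  ext n
  set s := (h.2 n).toFinset with hs
  set s' := (h'.2 n).toFinset with hs'
  rw [PowerSeries.coeff_mul, coeff_Th_finset _ _ n (s ×ˢ s')]
  · have key : ∀ p ∈ Finset.HasAntidiagonal.antidiagonal n, (Th e w).coeff p.1 * (Th e' w').coeff p.2 =
        ∑ x ∈ s ×ˢ s', if e x.1 = (p.1 : ℤ) ∧ e' x.2 = (p.2 : ℤ) then w x.1 * w' x.2 else 0 := by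
      intro p hp
      have hp' := Finset.HasAntidiagonal.mem_antidiagonal.1 hp
      rw [coeff_Th_finset e w p.1 s, coeff_Th_finset e' w' p.2 s', Finset.sum_mul_sum,
        Finset.sum_product]
      · refine Finset.sum_congr rfl fun i _ => Finset.sum_congr rfl fun j _ => ?_
        by_cases h1 : e i = (p.1 : ℤ) <;> by_cases h2 : e' j = (p.2 : ℤ) <;> simp [h1, h2]
      · intro i hi
        simp only [hs', Set.Finite.mem_toFinset, Set.mem_ofPred_eq]
        omega
      · intro i hi
        simp only [hs, Set.Finite.mem_toFinset, Set.mem_ofPred_eq]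
        omega
    rw [Finset.sum_congr rfl key, Finset.sum_comm]
    refine Finset.sum_congr rfl fun x _ => ?_
    have h1 := h.1 x.1
    have h2 := h'.1 x.2
    split_ifs with hx
    · rw [Finset.sum_eq_single ((e x.1).toNat, (e' x.2).toNat)]
      · rw [if_pos]; constructor <;> simp [h1, h2]
      · rintro ⟨a, b⟩ _ hne
        rw [if_neg]
        rintro ⟨ha, hb⟩
        apply hne
        simp only at ha hb
        simp [ha, hb]
      · intro hn
        exfalso; apply hn
        rw [Finset.HasAntidiagonal.mem_antidiagonal]
        simp only
        omega
    · apply Finset.sum_eq_zero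
      intro p hp
      have hp' := Finset.HasAntidiagonal.mem_antidiagonal.1 hp
      rw [if_neg]
      rintro ⟨ha, hb⟩
      apply hx
      omega
  · rintro ⟨i, j⟩ hij
    have := h.1 i
    have := h'.1 j
    simp only at hij
    simp only [hs, hs', Finset.mem_product, Set.Finite.mem_toFinset, Set.mem_ofPred_eq]
    constructor <;> linarith

lemma Th_split {ι : Type} {e : ι → ℤ} (h : FinFib e) (w : ι → ZMod 3) (d : ℕ)
    (f : Fin d → ι → ι) (hb : Function.Bijective fun p : ι × Fin d => f p.2 p.1) :
    Th e w = ∑ r, Th (fun j => e (f r j)) (fun j => w (f r j)) := by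
  rw [Th_equiv (Equiv.ofBijective _ hb) e w (fun p => e (f p.2 p.1)) (fun p => w (f p.2 p.1))
    (fun _ => rfl) (fun _ => rfl)]
  ext n
  have hfin : {p : ι × Fin d | e (f p.2 p.1) ≤ n}.Finite :=
    Set.Finite.preimage (f := fun p : ι × Fin d => f p.2 p.1) (hb.1.injOn) (h.2 n)
  classical
  set s := hfin.toFinset.image Prod.fst
  rw [map_sum, coeff_Th_finset _ _ n (s ×ˢ Finset.univ), Finset.sum_product_right]
  · refine Finset.sum_congr rfl fun r _ => ?_
    rw [coeff_Th_finset _ _ n s]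
    intro i hi
    simp only [s, Finset.mem_image, Set.Finite.mem_toFinset]
    exact ⟨(i, r), hi.le, rfl⟩
  · rintro ⟨i, r⟩ hi
    simp only [s, Finset.mem_product, Finset.mem_image, Set.Finite.mem_toFinset, Finset.mem_univ,
      and_true]
    exact ⟨(i, r), hi.le, rfl⟩

lemma Th_split2 {e : ℤ → ℤ} (h : FinFib e) (w : ℤ → ZMod 3) :
    Th e w = Th (fun j => e (2 * j)) (fun j => w (2 * j)) +
      Th (fun j => e (-2 * j - 1)) (fun j => w (-2 * j - 1)) := by
  rw [Th_split h w 2 ![fun j => 2 * j, fun j => -2 * j - 1]]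
  · simp [Fin.sum_univ_two]
  · constructor
    · rintro ⟨i, r⟩ ⟨j, t⟩ hh
      fin_cases r <;> fin_cases t <;> simp at hh ⊢ <;> omega
    · intro k
      by_cases hk : k % 2 = 0
      · exact ⟨(k / 2, 0), by simp; omega⟩
      · exact ⟨((-1 - k) / 2, 1), by simp; omega⟩

lemma Th_split3 {e : ℤ → ℤ} (h : FinFib e) (w : ℤ → ZMod 3) :
    Th e w = Th (fun j => e (3 * j)) (fun j => w (3 * j)) +
      Th (fun j => e (3 * j + 1)) (fun j => w (3 * j + 1)) +
      Th (fun j => e (-3 * j - 1)) (fun j => w (-3 * j - 1)) := by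
  rw [Th_split h w 3 ![fun j => 3 * j, fun j => 3 * j + 1, fun j => -3 * j - 1]]
  · simp [Fin.sum_univ_three]
  · constructor
    · rintro ⟨i, r⟩ ⟨j, t⟩ hh
      fin_cases r <;> fin_cases t <;> simp at hh ⊢ <;> omega
    · intro k
      have : k % 3 = 0 ∨ k % 3 = 1 ∨ k % 3 = 2 := by omega
      rcases this with hk | hk | hk
      · exact ⟨(k / 3, 0), by simp; omega⟩
      · exact ⟨(k / 3, 1), by simp; omega⟩
      · exact ⟨((-1 - k) / 3, 2), by simp; omega⟩

lemma Th_split3' {e : ℤ × ℤ → ℤ} (h : FinFib e) (w : ℤ × ℤ → ZMod 3) :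
    Th e w = Th (fun j : ℤ × ℤ => e (3 * j.1, j.2)) (fun j : ℤ × ℤ => w (3 * j.1, j.2)) +
      Th (fun j : ℤ × ℤ => e (3 * j.1 + 1, j.2)) (fun j : ℤ × ℤ => w (3 * j.1 + 1, j.2)) +
      Th (fun j : ℤ × ℤ => e (-3 * j.1 - 1, j.2)) (fun j : ℤ × ℤ => w (-3 * j.1 - 1, j.2)) := by
  rw [Th_split h w 3 ![fun j : ℤ × ℤ => (3 * j.1, j.2), fun j => (3 * j.1 + 1, j.2),
    fun j => (-3 * j.1 - 1, j.2)]]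
  · simp [Fin.sum_univ_three]
  · constructor
    · rintro ⟨⟨i, x⟩, r⟩ ⟨⟨j, y⟩, t⟩ hh
      fin_cases r <;> fin_cases t <;> simp at hh ⊢ <;> omega
    · rintro ⟨k, x⟩
      have : k % 3 = 0 ∨ k % 3 = 1 ∨ k % 3 = 2 := by omega
      rcases this with hk | hk | hk
      · exact ⟨((k / 3, x), 0), by simp; omega⟩
      · exact ⟨((k / 3, x), 1), by simp; omega⟩
      · exact ⟨(((-1 - k) / 3, x), 2), by simp; omega⟩

lemma cube_eq_expand (f : PowerSeries (ZMod 3)) :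
    f ^ 3 = PowerSeries.expand 3 (by norm_num) f := by
  have : Fact (Nat.Prime 3) := ⟨by norm_num⟩
  have h := MvPowerSeries.map_frobenius_expand (σ := Unit) (R := ZMod 3) 3 (by norm_num) (f := f)
  rw [← h, ZMod.frobenius_zmod]
  simp [PowerSeries.expand]

lemma Th_cube {ι : Type} (e : ι → ℤ) (w : ι → ZMod 3) :
    Th e w ^ 3 = Th (fun i => 3 * e i) w := by
  rw [cube_eq_expand]
  refine PowerSeries.ext fun n => ?_
  rw [PowerSeries.coeff_expand]
  split_ifs with h
  · obtain ⟨m, rfl⟩ := h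
    rw [coeff_Th, coeff_Th]
    apply finsum_congr
    intro i
    have : 3 * m / 3 = m := by omega
    rw [this]
    congr 1
    push_cast
    apply propext
    constructor <;> intro <;> omega
  · symm
    rw [coeff_Th]
    apply finsum_eq_zero_of_forall_eq_zero
    intro i
    apply if_neg
    beta_reduce
    omega

lemma X_mul_Th {ι : Type} {e : ι → ℤ} (h : FinFib e) (w : ι → ZMod 3) (k : ℕ) :
    PowerSeries.X ^ k * Th e w = Th (fun i => e i + k) w := by
  refine PowerSeries.ext fun n => ?_
  rw [PowerSeries.coeff_X_pow_mul']
  split_ifs with hk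
  · rw [coeff_Th, coeff_Th]
    apply finsum_congr
    intro i
    congr 1
    apply propext
    push_cast [Nat.cast_sub hk]
    constructor <;> intro <;> omega
  · symm
    rw [coeff_Th]
    apply finsum_eq_zero_of_forall_eq_zero
    intro i
    have := h.1 i
    apply if_neg
    beta_reduce
    omega

lemma Th_neg {ι : Type} (e : ι → ℤ) (w : ι → ZMod 3) :
    - Th e w = Th e (fun i => - w i) := by
  ext n
  rw [map_neg, coeff_Th, coeff_Th, ← finsum_neg_distrib]
  apply finsum_congr
  intro i
  split_ifs <;> simp

lemma finFib_of {e : ℤ → ℤ} (h0 : ∀ i, 0 ≤ e i) (h : ∀ i, |i| ≤ e i + 1) : FinFib e := by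
  refine ⟨h0, fun n => (Set.finite_Icc (-(n + 1)) (n + 1)).subset ?_⟩
  intro i hi
  have := h i
  have := abs_le.1 this
  simp only [Set.mem_ofPred_eq] at hi
  constructor <;> linarith

/-- the sign `(-1) ^ k` in `ZMod 3` -/
def sg (k : ℤ) : ZMod 3 := if k % 2 = 0 then 1 else -1

lemma sg_eq {a b : ℤ} (h : a % 2 = b % 2) : sg a = sg b := by simp [sg, h]

lemma sg_neg {a b : ℤ} (h : a % 2 ≠ b % 2) : sg a = - sg b := by
  unfold sg
  split_ifs <;> first | omega | simp

lemma sg_mul (a b : ℤ) : sg a * sg b = sg (a + b) := by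
  unfold sg
  split_ifs <;> first | omega | simp

noncomputable def thB : PowerSeries (ZMod 3) := Th (fun k : ℤ => 2 * k ^ 2 + k) sg
noncomputable def thC : PowerSeries (ZMod 3) := Th (fun k : ℤ => k ^ 2 + k) (fun _ => 1)
noncomputable def thP : PowerSeries (ZMod 3) := Th (fun k : ℤ => k ^ 2) sg
noncomputable def thA : PowerSeries (ZMod 3) := Th (fun k : ℤ => 3 * k ^ 2 + k) (fun _ => 1)
noncomputable def thU : PowerSeries (ZMod 3) := Th (fun k : ℤ => 6 * k ^ 2 + k) sg
noncomputable def thV : PowerSeries (ZMod 3) :=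
  Th (fun k : ℤ => 6 * k ^ 2 + 5 * k + 1) (fun k => - sg k)

lemma sq_ge_abs (k : ℤ) : |k| ≤ k ^ 2 := by
  rw [← sq_abs]
  have := abs_nonneg k
  rcases this.eq_or_lt with h | h
  · rw [← h]; norm_num
  · nlinarith

lemma ffB : FinFib (fun k : ℤ => 2 * k ^ 2 + k) := by
  refine ⟨fun k => ?_, (finFib_of (e := fun k => 2 * k ^ 2 + k) (fun k => ?_) fun k => ?_).2⟩ <;>
  · have h1 := sq_ge_abs k
    have h2 := neg_abs_le k
    have h3 := abs_nonneg k
    beta_reduce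
    linarith

lemma ffC : FinFib (fun k : ℤ => k ^ 2 + k) := by
  have h0 : ∀ k : ℤ, 0 ≤ k ^ 2 + k := fun k => by
    have h1 := sq_ge_abs k
    have h2 := neg_abs_le k
    linarith
  refine finFib_of h0 fun k => ?_
  beta_reduce
  rcases abs_cases k with h | h <;> nlinarith [sq_nonneg (k + 1)]

lemma ffP : FinFib (fun k : ℤ => k ^ 2) := by
  refine finFib_of (fun k => sq_nonneg k) fun k => ?_
  have h1 := sq_ge_abs k
  linarith

lemma ffA : FinFib (fun k : ℤ => 3 * k ^ 2 + k) := by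
  refine finFib_of (fun k => ?_) fun k => ?_ <;>
  · have h1 := sq_ge_abs k
    have h2 := neg_abs_le k
    have h3 := abs_nonneg k
    beta_reduce
    linarith

lemma ffU : FinFib (fun k : ℤ => 6 * k ^ 2 + k) := by
  refine finFib_of (fun k => ?_) fun k => ?_ <;>
  · have h1 := sq_ge_abs k
    have h2 := neg_abs_le k
    have h3 := abs_nonneg k
    beta_reduce
    linarith

lemma ffV : FinFib (fun k : ℤ => 6 * k ^ 2 + 5 * k + 1) := by
  refine finFib_of (fun k => ?_) fun k => ?_ <;>
  · have h1 := sq_ge_abs k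
    have h2 := neg_abs_le k
    have h3 := abs_nonneg k
    beta_reduce
    linarith

open PowerSeries

lemma FinFib.three {ι : Type} {e : ι → ℤ} (h : FinFib e) : FinFib (fun i => 3 * e i) := by
  refine ⟨fun i => by have := h.1 i; positivity, fun n => (h.2 n).subset fun i hi => ?_⟩
  have := h.1 i
  simp only [Set.mem_ofPred_eq] at hi ⊢
  linarith

lemma Th_nine {ι : Type} (e : ι → ℤ) (w : ι → ZMod 3) :
    Th e w ^ 9 = Th (fun i => 3 * (3 * e i)) w := by
  rw [show 9 = 3 * 3 from rfl, pow_mul, Th_cube, Th_cube]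

lemma idB : thB = (thU + thV) ^ 3 - X * thB ^ 9 := by
  have h3 : (thU + thV) ^ 3 = thU ^ 3 + thV ^ 3 := by
    have : Fact (Nat.Prime 3) := ⟨by norm_num⟩
    simp only [cube_eq_expand, map_add]
  rw [h3, sub_eq_add_neg, ← mul_neg]
  conv_lhs => rw [thB, Th_split3 ffB]
  congr 1
  · congr 1
    · rw [thU, Th_cube]
      exact congrArg₂ Th (by ext j; ring) (by ext j; exact sg_eq (by omega))
    · rw [thV, Th_cube]
      exact congrArg₂ Th (by ext j; ring) (by ext j; exact sg_neg (by omega))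
  · rw [thB, Th_nine, Th_neg, ← pow_one X, X_mul_Th ffB.three.three]
    exact congrArg₂ Th (by ext j; push_cast; ring) (by ext j; exact sg_neg (by omega))

lemma idC : thC = - thA ^ 3 + X ^ 2 * thC ^ 9 := by
  have h : - thA ^ 3 = thA ^ 3 + thA ^ 3 := by
    have : (3 : PowerSeries (ZMod 3)) = 0 := by
      have : (3 : ZMod 3) = 0 := rfl
      rw [← map_ofNat (C (R := ZMod 3)) 3, this, map_zero]
    linear_combination (- thA ^ 3) * this
  rw [h]
  conv_lhs => rw [thC, Th_split3 ffC]
  rw [add_right_comm]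
  congr 1
  · rw [thA, Th_cube]
    congr 1
    · exact congrArg₂ Th (by ext j; ring) rfl
    · exact congrArg₂ Th (by ext j; ring) rfl
  · rw [thC, Th_nine, X_mul_Th ffC.three.three]
    exact congrArg₂ Th (by ext j; push_cast; ring) rfl

def shear (f : ℤ → ℤ) : ℤ × ℤ ≃ ℤ × ℤ where
  toFun p := (p.1, p.2 + f p.1)
  invFun p := (p.1, p.2 - f p.1)
  left_inv p := by simp
  right_inv p := by simp

def shearN (f : ℤ → ℤ) : ℤ × ℤ ≃ ℤ × ℤ where
  toFun p := (p.1, - p.2 + f p.1)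
  invFun p := (p.1, f p.1 - p.2)
  left_inv p := by simp
  right_inv p := by simp

def shear0 : ℤ × ℤ ≃ ℤ × ℤ where
  toFun p := (p.2, p.1 + p.2)
  invFun p := (p.2 - p.1, p.1)
  left_inv p := by simp
  right_inv p := by simp

lemma idPB : thP * thB = thA * (thU + thV) - X * thC ^ 3 * thB ^ 3 := by
  have e0 : thP * thB = Th (fun p : ℤ × ℤ => p.2 ^ 2 + (2 * (p.1 + p.2) ^ 2 + (p.1 + p.2)))
      (fun p => sg p.1) := by
    rw [thP, thB, Th_mul ffP ffB]
    refine Th_equiv shear0 _ _ _ _ ?_ ?_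
    · intro p; simp [shear0]
    · intro p; simp only [shear0, sg_mul, Equiv.coe_fn_mk]; exact sg_eq (by omega)
  have ff0 : FinFib (fun p : ℤ × ℤ => p.2 ^ 2 + (2 * (p.1 + p.2) ^ 2 + (p.1 + p.2))) := by
    have := ffP.prod ffB
    refine ⟨fun p => this.1 (shear0 p), fun n => ?_⟩
    exact Set.Finite.preimage (f := shear0) shear0.injective.injOn (this.2 n)
  rw [e0, Th_split3' ff0, mul_add, sub_eq_add_neg, mul_comm thA, mul_comm thA]
  congr 1
  · congr 1
    · rw [thU, thA, Th_mul ffU ffA]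
      symm
      refine Th_equiv (shear fun j => 2 * j) _ _ _ _ ?_ ?_
      · intro p; simp only [shear, Equiv.coe_fn_mk]; ring
      · intro p; simp only [shear, Equiv.coe_fn_mk, mul_one]; exact sg_eq (by omega)
    · rw [thV, thA, Th_mul ffV ffA]
      symm
      refine Th_equiv (shearN fun j => - 1 - 2 * j) _ _ _ _ ?_ ?_
      · intro p; simp only [shearN, Equiv.coe_fn_mk]; ring
      · intro p; simp only [shearN, Equiv.coe_fn_mk, mul_one]; exact sg_neg (by omega)
  · rw [mul_assoc, mul_comm (thC ^ 3), thB, thC, Th_cube, Th_cube, Th_mul ffB.three ffC.three,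
      ← pow_one X, X_mul_Th (ffB.three.prod ffC.three), Th_neg]
    symm
    refine Th_equiv (shear fun j => - 1 - 2 * j) _ _ _ _ ?_ ?_
    · intro p; simp only [shear, Equiv.coe_fn_mk]; push_cast; ring
    · intro p; simp only [shear, Equiv.coe_fn_mk, mul_one]; exact sg_neg (by omega)

lemma coeff_thP (n : ℕ) (h : n % 3 = 2) : thP.coeff n = 0 := by
  rw [thP, coeff_Th]
  apply finsum_eq_zero_of_forall_eq_zero
  intro i
  apply if_neg
  beta_reduce
  intro hi
  have h1 : (i ^ 2) % 3 = 2 := by omega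
  have h2 : i % 3 = 0 ∨ i % 3 = 1 ∨ i % 3 = 2 := by omega
  rcases h2 with h2 | h2 | h2 <;> simp [pow_two, Int.mul_emod, h2] at h1

lemma coeff_cube_mul (f : PowerSeries (ZMod 3)) (r m : ℕ) :
    (X ^ r * f ^ 3).coeff (3 * m + r) = f.coeff m := by
  rw [coeff_X_pow_mul, cube_eq_expand, coeff_expand_mul]

lemma coeff_cube_mul' (f : PowerSeries (ZMod 3)) (r n : ℕ) (hr : r < 3) (h : n % 3 ≠ r) :
    (X ^ r * f ^ 3).coeff n = 0 := by
  rw [coeff_X_pow_mul', cube_eq_expand]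
  split_ifs
  · rw [coeff_expand_of_not_dvd]
    omega
  · rfl

lemma three_eq_zero : (3 : PowerSeries (ZMod 3)) = 0 := by
  have : (3 : ZMod 3) = 0 := rfl
  rw [← map_ofNat (C (R := ZMod 3)) 3, this, map_zero]

lemma sub_cube (f g : PowerSeries (ZMod 3)) : (f - g) ^ 3 = f ^ 3 - g ^ 3 := by
  simp only [cube_eq_expand, map_sub]

lemma coeff_zero_thB : thB.coeff 0 = 1 := by
  rw [thB, coeff_Th_finset _ _ 0 {0}]
  · simp [sg]
  · intro k hk
    simp only [Nat.cast_zero] at hk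
    have : k * (2 * k + 1) = 0 := by linarith
    rcases mul_eq_zero.1 this with h | h
    · simp [h]
    · omega

/-- The combinatorial heart: if `F * B = C` then `F` has no coefficients at `9 m + 7`. -/
lemma core (F : PowerSeries (ZMod 3)) (hF : F * thB = - thC) (m : ℕ) :
    F.coeff (9 * m + 7) = 0 := by
  obtain ⟨I, hI⟩ : ∃ I, thB * I = 1 := by
    have : IsUnit thB := by
      rw [PowerSeries.isUnit_iff_constantCoeff, ← coeff_zero_eq_constantCoeff_apply,
        coeff_zero_thB]
      exact isUnit_one
    exact this.exists_right_inv
  have hB := idB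
  have hC := idC
  have hPB := idPB
  have h3 := three_eq_zero
  generalize thU + thV = W at hB hPB
  have k0 := sub_cube (thA * W ^ 2) (X * thC ^ 3 * W * thB ^ 3)
  have k1 := sub_cube (thA * W) (X * thC ^ 3 * thB ^ 3)
  have k2 := sub_cube (thA * thB ^ 6) (thC ^ 3 * W ^ 2)
  rw [← hPB] at k1
  have main : F * thB ^ 3 = (thA * W ^ 2 - X * thC ^ 3 * W * thB ^ 3) ^ 3 +
      X * (thB ^ 4 * thP) ^ 3 + X ^ 2 * (thA * thB ^ 6 - thC ^ 3 * W ^ 2) ^ 3 := by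
    rw [k0, k2, show X * (thB ^ 4 * thP) ^ 3 = X * thB ^ 9 * (thP * thB) ^ 3 by ring, k1]
    have e1 : F * thB ^ 3 = (thA ^ 3 - X ^ 2 * thC ^ 9) * (W ^ 3 - X * thB ^ 9) ^ 2 := by
      rw [← hB]
      linear_combination thB ^ 2 * hF - thB ^ 2 * hC
    rw [e1]
    linear_combination (- X * thA ^ 3 * W ^ 3 * thB ^ 9 + X ^ 3 * thC ^ 9 * W ^ 3 * thB ^ 9) * h3
  have hI3 : thB ^ 3 * I ^ 3 = 1 := by rw [← mul_pow, hI, one_pow]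
  have fin : F = X ^ 0 * ((thA * W ^ 2 - X * thC ^ 3 * W * thB ^ 3) * I) ^ 3 +
      X ^ 1 * (thB ^ 3 * thP) ^ 3 + X ^ 2 * ((thA * thB ^ 6 - thC ^ 3 * W ^ 2) * I) ^ 3 := by
    linear_combination I ^ 3 * main + (- F + X * (thB ^ 3 * thP) ^ 3) * hI3
  rw [fin, map_add, map_add, coeff_cube_mul' _ 0 _ (by norm_num) (by omega),
    coeff_cube_mul' _ 2 _ (by norm_num) (by omega),
    show 9 * m + 7 = 3 * (3 * m + 2) + 1 by ring, coeff_cube_mul, zero_add, add_zero, coeff_mul]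
  apply Finset.sum_eq_zero
  intro p hp
  have hp' := Finset.HasAntidiagonal.mem_antidiagonal.1 hp
  by_cases h : 3 ∣ p.1
  · rw [coeff_thP p.2 (by omega), mul_zero]
  · rw [cube_eq_expand, coeff_expand_of_not_dvd _ _ _ h, zero_mul]

section shanks
variable {R : Type} [CommRing R]

/-- the mixed products in the proof by Shanks of the identity of Gauss -/
def shT (q : R) (n s : ℕ) : R :=
  (∏ k ∈ Finset.Ico s n, (1 - q ^ (2 * k + 2))) * ∏ k ∈ Finset.range s, (1 - q ^ (2 * k + 1))

lemma shT_succ (q : R) {n s : ℕ} (h : s ≤ n) :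
    shT q (n + 1) s = shT q n s * (1 - q ^ (2 * n + 2)) := by
  rw [shT, shT, Finset.prod_Ico_succ_top h]; ring

lemma shT_step (q : R) {n s : ℕ} (h : s < n) :
    shT q n (s + 1) * (1 - q ^ (2 * s + 2)) = shT q n s * (1 - q ^ (2 * s + 1)) := by
  rw [shT, shT, Finset.prod_eq_prod_Ico_succ_bot h, Finset.prod_range_succ]; ring

lemma shanks (q : R) (n : ℕ) :
    (∑ k ∈ Finset.range n, (q ^ (k * (2 * k + 1)) + q ^ ((k + 1) * (2 * k + 1)))) *
      ∏ k ∈ Finset.range n, (1 - q ^ (2 * k + 1)) =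
    ∑ s ∈ Finset.range n, shT q n s * q ^ (s * (2 * n + 1)) := by
  induction n with
  | zero => simp
  | succ n ih =>
    have tel := Finset.sum_range_sub
      (fun s => shT q n s * (1 - q ^ (2 * s)) * q ^ (s * (2 * n + 1))) n
    have e : ∀ s ∈ Finset.range n, shT q (n + 1) s * q ^ (s * (2 * (n + 1) + 1)) =
        (shT q n (s + 1) * (1 - q ^ (2 * (s + 1))) * q ^ ((s + 1) * (2 * n + 1)) -
          shT q n s * (1 - q ^ (2 * s)) * q ^ (s * (2 * n + 1))) +
        shT q n s * q ^ (s * (2 * n + 1)) * (1 - q ^ (2 * n + 1)) := by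
      intro s hs
      have hs := Finset.mem_range.1 hs
      rw [shT_succ q hs.le, show 2 * (s + 1) = 2 * s + 2 by ring, shT_step q hs]
      ring
    have hn : shT q n n = ∏ k ∈ Finset.range n, (1 - q ^ (2 * k + 1)) := by simp [shT]
    rw [Finset.sum_range_succ _ n, Finset.sum_range_succ _ n, Finset.sum_congr rfl e,
      Finset.sum_add_distrib (s := Finset.range n) (g := fun s =>
        shT q n s * q ^ (s * (2 * n + 1)) * (1 - q ^ (2 * n + 1))), tel, ← Finset.sum_mul, ← ih, Finset.prod_range_succ,
      shT_succ q le_rfl, hn]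
    ring

end shanks

open scoped PowerSeries.WithPiTopology
open Filter Topology

lemma multip {q : PowerSeries (ZMod 3)} (hq : X ∣ q) (u : ℕ → ℕ) (hu : ∀ k, k < u k) :
    Multipliable fun k => 1 - q ^ u k := by
  simp_rw [sub_eq_add_neg]
  apply PowerSeries.WithPiTopology.multipliable_one_add_of_tendsto_order_atTop_nhds_top
  refine ENat.tendsto_nhds_top_iff_natCast_lt.mpr (fun n ↦ Filter.eventually_atTop.mpr ⟨n, ?_⟩)
  intro m hm
  rw [order_neg]
  have : ((u m : ℕ) : ℕ∞) ≤ (q ^ u m).order :=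
    PowerSeries.le_order _ _ fun i hi =>
      (PowerSeries.X_pow_dvd_iff.1 (pow_dvd_pow_of_dvd hq _)) i (by exact_mod_cast hi)
  refine lt_of_lt_of_le ?_ this
  norm_cast
  exact lt_of_le_of_lt hm (hu m)

lemma gauss {q : PowerSeries (ZMod 3)} (hq : X ∣ q) (L : PowerSeries (ZMod 3))
    (hL : Tendsto (fun n => ∑ k ∈ Finset.range n,
      (q ^ (k * (2 * k + 1)) + q ^ ((k + 1) * (2 * k + 1)))) atTop (𝓝 L)) :
    L * ∏' k : ℕ, (1 - q ^ (2 * k + 1)) = ∏' k : ℕ, (1 - q ^ (2 * k + 2)) := by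
  have h1 := (multip hq (fun k => 2 * k + 1) (fun k => by omega)).hasProd.tendsto_prod_nat
  have h2 := (multip hq (fun k => 2 * k + 2) (fun k => by omega)).hasProd.tendsto_prod_nat
  have h3 := hL.mul h1
  simp only [shanks] at h3
  refine tendsto_nhds_unique h3 ?_
  have h4 : Tendsto (fun n : ℕ => ∑ s ∈ Finset.range n, shT q n s * q ^ (s * (2 * n + 1)) -
      ∏ k ∈ Finset.range n, (1 - q ^ (2 * k + 2))) atTop (𝓝 0) := by
    rw [PowerSeries.WithPiTopology.tendsto_iff_coeff_tendsto]
    intro d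
    apply tendsto_const_nhds.congr'
    filter_upwards [eventually_gt_atTop d] with n hn
    obtain ⟨n, rfl⟩ : ∃ m, n = m + 1 := ⟨n - 1, by omega⟩
    rw [Finset.sum_range_succ']
    have : X ^ (2 * (n + 1) + 1) ∣ ∑ s ∈ Finset.range n,
        shT q (n + 1) (s + 1) * q ^ ((s + 1) * (2 * (n + 1) + 1)) := by
      apply Finset.dvd_sum
      intro s _
      apply Dvd.dvd.mul_left
      refine (pow_dvd_pow_of_dvd hq _).trans (pow_dvd_pow _ ?_)
      nlinarith
    simp only [shT, Finset.range_zero, Finset.prod_empty, mul_one, zero_mul, pow_zero,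
      Nat.Ico_zero_eq_range, add_sub_cancel_right, map_zero] at this ⊢
    exact ((PowerSeries.X_pow_dvd_iff.1 this) d (by omega)).symm
  simpa using h4.add h2

lemma sum_Ico_symm {M : Type} [AddCommMonoid M] (f : ℤ → M) (n : ℕ) :
    ∑ k ∈ Finset.Ico (-(n : ℤ)) n, f k = ∑ k ∈ Finset.range n, (f k + f (-k - 1)) := by
  induction n with
  | zero => simp
  | succ n ih =>
    rw [Finset.sum_range_succ, ← ih]
    have : Finset.Ico (-((n + 1 : ℕ) : ℤ)) ((n + 1 : ℕ) : ℤ) =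
        insert (n : ℤ) (insert (-(n : ℤ) - 1) (Finset.Ico (-(n : ℤ)) n)) := by
      ext k
      simp only [Finset.mem_Ico, Finset.mem_insert]
      omega
    rw [this, Finset.sum_insert, Finset.sum_insert]
    · abel
    · simp
    · simp only [Finset.mem_Ico, Finset.mem_insert]
      omega

lemma tendsto_Th {q : PowerSeries (ZMod 3)} {e : ℤ → ℤ} {w : ℤ → ZMod 3}
    (he : ∀ k, |k| ≤ e k + 1)
    (hq : ∀ (k : ℤ) (m N : ℕ), (m : ℤ) = 2 * k ^ 2 + k →
      coeff N (q ^ m) = if e k = N then w k else 0) :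
    Tendsto (fun n => ∑ k ∈ Finset.range n,
      (q ^ (k * (2 * k + 1)) + q ^ ((k + 1) * (2 * k + 1)))) atTop (𝓝 (Th e w)) := by
  rw [PowerSeries.WithPiTopology.tendsto_iff_coeff_tendsto]
  intro d
  apply tendsto_const_nhds.congr'
  filter_upwards [eventually_gt_atTop (d + 1)] with n hn
  rw [coeff_Th_finset e w d (Finset.Ico (-(n : ℤ)) n), sum_Ico_symm, map_sum]
  · refine Finset.sum_congr rfl fun k _ => ?_
    rw [map_add, hq k _ _ (by push_cast; ring), hq (-k - 1) _ _ (by push_cast; ring)]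
  · intro k hk
    have := abs_le.1 (he k)
    rw [Finset.mem_Ico]
    omega

lemma gaussB : thB * ∏' k : ℕ, (1 - (-X) ^ (2 * k + 1)) =
    ∏' k : ℕ, (1 - (-X : PowerSeries (ZMod 3)) ^ (2 * k + 2)) := by
  refine gauss (by simp) _ (tendsto_Th ?_ ?_)
  · intro k
    have h1 := sq_ge_abs k
    have h2 := neg_abs_le k
    linarith
  · intro k m N hm
    rw [neg_pow, ← map_one C, ← map_neg C, ← map_pow, coeff_C_mul, coeff_X_pow]
    have : ((-1 : ZMod 3)) ^ m = sg k := by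
      unfold sg
      have hk : (2 * k ^ 2 + k) % 2 = k % 2 := by omega
      split_ifs with h
      · exact Even.neg_one_pow (by rw [Nat.even_iff]; omega)
      · exact Odd.neg_one_pow (by rw [Nat.odd_iff]; omega)
    rw [this, ← hm]
    by_cases h : N = m
    · simp [h]
    · have : ¬ ((m : ℤ) = N) := by omega
      simp [h, this]

lemma thC_eq : - thC = Th (fun k : ℤ => 2 * (2 * k ^ 2 + k)) (fun _ => 1) := by
  have : thC = Th (fun k : ℤ => 2 * (2 * k ^ 2 + k)) (fun _ => 1) +
      Th (fun k : ℤ => 2 * (2 * k ^ 2 + k)) (fun _ => 1) := by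
    rw [thC, Th_split2 ffC]
    congr 1
    · exact congrArg₂ Th (by ext j; ring) rfl
    · exact congrArg₂ Th (by ext j; ring) rfl
  rw [this]
  linear_combination (- Th (fun k : ℤ => 2 * (2 * k ^ 2 + k)) (fun _ => 1)) * three_eq_zero

lemma gaussC : - thC * ∏' k : ℕ, (1 - (X ^ 2) ^ (2 * k + 1)) =
    ∏' k : ℕ, (1 - (X ^ 2 : PowerSeries (ZMod 3)) ^ (2 * k + 2)) := by
  rw [thC_eq]
  refine gauss (dvd_pow_self _ two_ne_zero) _ (tendsto_Th ?_ ?_)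
  · intro k
    have h1 := sq_ge_abs k
    have h2 := neg_abs_le k
    have h3 := abs_nonneg k
    linarith
  · intro k m N hm
    rw [← pow_mul, coeff_X_pow, ← hm]
    by_cases h : N = 2 * m
    · simp [h]
    · have : ¬ (2 * (m : ℤ) = N) := by omega
      simp [h, this]

noncomputable def Fgen : PowerSeries (ZMod 3) :=
  PowerSeries.mk fun n => ((Nat.Partition.restricted n (¬ 4 ∣ ·)).card : ZMod 3)

lemma Fgen_mul : Fgen * ∏' k : ℕ, (1 - X ^ (k + 1)) =
    ∏' k : ℕ, (1 - (X ^ 2 : PowerSeries (ZMod 3)) ^ (2 * k + 2)) := by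
  have : Fact (Nat.Prime 3) := ⟨by norm_num⟩
  have hm := Nat.Partition.multipliable_powerSeriesMk_card_countRestricted (ZMod 3) 4
  rw [Fgen,
    Nat.Partition.powerSeriesMk_card_restricted_eq_powerSeriesMk_card_countRestricted (ZMod 3)
      (by norm_num : 0 < 4),
    Nat.Partition.powerSeriesMk_card_countRestricted_eq_tprod (ZMod 3) (by norm_num : 0 < 4),
    ← hm.tprod_mul (multip dvd_rfl (fun k => k + 1) (fun k => by omega))]
  refine tprod_congr fun k => ?_
  simp only [Finset.sum_range_succ, Finset.sum_range_zero]
  ring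

lemma Fgen_B : Fgen * thB = - thC := by
  have : Fact (Nat.Prime 3) := ⟨by norm_num⟩
  have h1 := gaussB
  have h2 := gaussC
  have h3 := Fgen_mul
  have hne := PowerSeries.WithPiTopology.tprod_one_sub_X_pow_ne_zero (ZMod 3)
  have h4 := tprod_even_mul_odd (f := fun k : ℕ => 1 - (X : PowerSeries (ZMod 3)) ^ (k + 1))
    (multip dvd_rfl (fun k => 2 * k + 1) (fun k => by omega))
    (multip dvd_rfl (fun k => 2 * k + 1 + 1) (fun k => by omega))
  have h5 := (multip (q := -X) (by simp) (fun k => 2 * k + 1) (fun k => by omega)).tprod_mul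
    (multip (q := X) dvd_rfl (fun k => 2 * k + 1) (fun k => by omega))
  have h6 : ∀ k : ℕ, (1 - (-X : PowerSeries (ZMod 3)) ^ (2 * k + 1)) * (1 - X ^ (2 * k + 1)) =
      1 - (X ^ 2) ^ (2 * k + 1) := by
    intro k
    rw [Odd.neg_pow ⟨k, rfl⟩]
    ring
  have h7 : ∀ k : ℕ, (-X : PowerSeries (ZMod 3)) ^ (2 * k + 2) = X ^ (2 * k + 1 + 1) := by
    intro k
    rw [Even.neg_pow ⟨k + 1, by ring⟩]
  simp only [h6] at h5
  simp only [h7] at h1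
  beta_reduce at h4
  rw [h5] at h2
  rw [← h4] at h3 hne
  rw [← h2] at h3
  generalize (∏' k : ℕ, (1 - (-X : PowerSeries (ZMod 3)) ^ (2 * k + 1))) = P at *
  generalize (∏' k : ℕ, (1 - (X : PowerSeries (ZMod 3)) ^ (2 * k + 1))) = Q at *
  generalize (∏' k : ℕ, (1 - (X : PowerSeries (ZMod 3)) ^ (2 * k + 1 + 1))) = E at *
  have hE : E ≠ 0 := right_ne_zero_of_mul hne
  have hQ : Q ≠ 0 := left_ne_zero_of_mul hne
  have hP : P ≠ 0 := by
    rintro rfl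
    rw [mul_zero] at h1
    exact hE h1.symm
  apply mul_right_cancel₀ (mul_ne_zero hQ hP)
  rw [← h1] at h3
  linear_combination h3

lemma b4 (m : ℕ) : (((Nat.Partition.restricted (9 * m + 7) (¬ 4 ∣ ·)).card : ℕ) : ZMod 3) = 0 := by
  have := core Fgen Fgen_B m
  simpa [Fgen] using this

lemma T4 (n : ℕ) : (Tcount 4 3 n : ZMod 3) = (Fgen ^ 3).coeff n := by
  classical
  have h1 : Fgen ^ 3 = ∏ _i : Fin 3, Fgen := by simp
  set S := (Finset.finsuppAntidiag (Finset.univ : Finset (Fin 3)) n).sigma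
    (fun l => Fintype.piFinset fun i => Nat.Partition.restricted (l i) (¬ 4 ∣ ·)) with hS
  have h2 : (Fgen ^ 3).coeff n = (S.card : ZMod 3) := by
    rw [h1, coeff_prod, hS, Finset.card_sigma]
    push_cast
    refine Finset.sum_congr rfl fun l _ => ?_
    rw [Fintype.card_piFinset]
    push_cast
    simp [Fgen]
  rw [h2, Tcount, ← Nat.card_eq_finsetCard S]
  congr 1
  symm
  let φ : S → {f : Fin 3 → Σ m : ℕ, Nat.Partition m //
      (∑ i, (f i).1) = n ∧ ∀ i, ∀ p ∈ (f i).2.parts, ¬ 4 ∣ p} := fun x =>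
    ⟨fun i => ⟨x.1.1 i, x.1.2 i⟩, by
      have hx := x.2
      simp only [hS, Finset.mem_sigma, Finset.mem_finsuppAntidiag, Fintype.mem_piFinset,
        Nat.Partition.restricted, Finset.mem_filter, Finset.mem_univ, true_and] at hx
      exact ⟨hx.1.1, hx.2⟩⟩
  refine Nat.card_eq_of_bijective φ ⟨?_, ?_⟩
  · rintro ⟨⟨l, g⟩, hx⟩ ⟨⟨l', g'⟩, hx'⟩ h
    have h' : ∀ i, (⟨l i, g i⟩ : Σ m : ℕ, Nat.Partition m) = ⟨l' i, g' i⟩ :=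
      fun i => congrFun (congrArg Subtype.val h) i
    have hl : l = l' := by
      ext i
      exact congrArg Sigma.fst (h' i)
    subst hl
    have hg : g = g' := by
      funext i
      simpa using h' i
    subst hg
    rfl
  · rintro ⟨f, hf1, hf2⟩
    refine ⟨⟨⟨Finsupp.equivFunOnFinite.symm (fun i => (f i).1), fun i => (f i).2⟩, ?_⟩, ?_⟩
    · rw [hS, Finset.mem_sigma]
      refine ⟨Finset.mem_finsuppAntidiag.2 ⟨hf1, Finset.subset_univ _⟩, ?_⟩
      refine Fintype.mem_piFinset.2 fun i => ?_
      exact Finset.mem_filter.2 ⟨Finset.mem_univ _, hf2 i⟩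
    · rfl

theorem stmt11 (n α : ℕ) :
    3 ∣ Tcount 4 3 (27 * 5 ^ (2 * α) * n + (171 * 5 ^ (2 * α) - 3) / 8) := by
  rw [← ZMod.natCast_eq_zero_iff, T4]
  obtain ⟨c, hc⟩ : ∃ c, 5 ^ (2 * α) = 24 * c + 1 := by
    have : (5 ^ (2 * α)) % 24 = 1 := by
      rw [pow_mul, Nat.pow_mod]; norm_num
    exact ⟨5 ^ (2 * α) / 24, by omega⟩
  have : 27 * 5 ^ (2 * α) * n + (171 * 5 ^ (2 * α) - 3) / 8 =
      3 * (9 * (5 ^ (2 * α) * n + 19 * c) + 7) := by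
    have : (171 * 5 ^ (2 * α) - 3) / 8 = 513 * c + 21 := by omega
    rw [this]; ring
  rw [this, cube_eq_expand, coeff_expand_mul]
  exact core Fgen Fgen_B _
end

section
/- Let p ≥ 5 be a prime such that −2 is a quadratic nonresidue modulo p. Then for all n, α ≥ 0 with p ∤ n, T_2(9 p^{2α+1} n + (9 p^{2α+2} − 1)/8) ≡ 0 (mod 6). -/
open PowerSeries in
/-- Generating function of 2-regular partitions. -/
noncomputable def oddSeries (R : Type) [CommRing R] : R⟦X⟧ :=
  PowerSeries.mk fun n ↦ ((Nat.Partition.restricted n (¬ 2 ∣ ·)).card : R)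

noncomputable def tripleEquiv (N : ℕ) :
    {f : Fin 3 → Σ m : ℕ, Nat.Partition m //
      (∑ i, (f i).1) = N ∧ ∀ i, ∀ p ∈ (f i).2.parts, ¬ 2 ∣ p} ≃
    Σ l : {l : Fin 3 →₀ ℕ // l ∈ Finset.finsuppAntidiag Finset.univ N},
      ∀ i : Fin 3, {q : Nat.Partition (l.1 i) // q ∈ Nat.Partition.restricted (l.1 i) (¬ 2 ∣ ·)} where
  toFun f := ⟨⟨Finsupp.equivFunOnFinite.symm (fun i => (f.1 i).1), by
      simp [Finset.mem_finsuppAntidiag, f.2.1]⟩,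
    fun i => ⟨(f.1 i).2, Finset.mem_filter.2 ⟨Finset.mem_univ _, f.2.2 i⟩⟩⟩
  invFun g := ⟨fun i => ⟨g.1.1 i, (g.2 i).1⟩, by
      have := g.1.2
      rw [Finset.mem_finsuppAntidiag] at this
      exact this.1, fun i => by
      simpa [Nat.Partition.restricted] using (g.2 i).2⟩
  left_inv f := rfl
  right_inv g := by
    obtain ⟨⟨l, hl⟩, g⟩ := g
    obtain ⟨h, rfl⟩ := Finsupp.equivFunOnFinite.symm.surjective l
    rfl

theorem card_sigma_aux (S : Finset (Fin 3 →₀ ℕ)) (A : ∀ m : ℕ, Finset (Nat.Partition m)) :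
    Nat.card (Σ l : {l : Fin 3 →₀ ℕ // l ∈ S}, ∀ i : Fin 3, {q : Nat.Partition (l.1 i) //
      q ∈ A (l.1 i)}) = ∑ l ∈ S, ∏ i, (A (l i)).card := by
  rw [Nat.card_eq_fintype_card, Fintype.card_sigma,
    ← Finset.sum_coe_sort S (fun l => ∏ i, (A (l i)).card)]
  refine Finset.sum_congr rfl fun l _ => ?_
  simp [Fintype.card_pi]

theorem Tcount_cast_s13 (R : Type) [CommRing R] (N : ℕ) :
    (Tcount 2 3 N : R) = PowerSeries.coeff N (oddSeries R ^ 3) := by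
  have h : oddSeries R ^ 3 = ∏ _i : Fin 3, oddSeries R := by simp
  rw [h, PowerSeries.coeff_prod, Tcount, Nat.card_congr (tripleEquiv N),
    card_sigma_aux _ fun m => Nat.Partition.restricted m (¬ 2 ∣ ·), Nat.cast_sum]
  refine Finset.sum_congr rfl fun l _ => ?_
  simp [oddSeries]

theorem coeff_pow_prime (q : ℕ) [Fact q.Prime] (f : PowerSeries (ZMod q)) :
    f ^ q = PowerSeries.expand q (Fact.out : q.Prime).ne_zero f := by
  have h := MvPowerSeries.map_frobenius_expand (σ := Unit) (R := ZMod q) q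
    (Fact.out : q.Prime).ne_zero (f := f)
  rw [ZMod.frobenius_zmod] at h
  rw [MvPowerSeries.map_id] at h
  exact h.symm

open PowerSeries.WithPiTopology in
theorem oddSeries_two : oddSeries (ZMod 2) = PowerSeries.pentagonalSeries (ZMod 2) := by
  let _ : TopologicalSpace (ZMod 2) := ⊥
  have _ : DiscreteTopology (ZMod 2) := ⟨rfl⟩
  rw [oddSeries, Nat.Partition.powerSeriesMk_card_restricted_eq_powerSeriesMk_card_countRestricted
    _ (by norm_num), Nat.Partition.powerSeriesMk_card_countRestricted_eq_tprod _ (by norm_num),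
    ← tprod_one_sub_X_pow]
  refine tprod_congr fun i => ?_
  have h2 : (2 : PowerSeries (ZMod 2)) = 0 := by
    have h : (2 : ZMod 2) = 0 := rfl
    have h' := congrArg (PowerSeries.C (R := ZMod 2)) h
    rwa [map_zero, map_ofNat] at h'
  simp only [Finset.sum_range_succ, Finset.sum_range_zero, mul_zero, pow_zero, zero_add, mul_one]
  linear_combination PowerSeries.X ^ (i + 1) * h2

theorem p_dvd_both (p : ℕ) (hp : p.Prime) (hqnr : ¬ IsSquare ((-2 : ZMod p))) (x y : ℤ)
    (h : (p : ℤ) ∣ x ^ 2 + 2 * y ^ 2) : (p : ℤ) ∣ x ∧ (p : ℤ) ∣ y := by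
  have := Fact.mk hp
  have h0 : (x : ZMod p) ^ 2 + 2 * (y : ZMod p) ^ 2 = 0 := by
    have := (ZMod.intCast_zmod_eq_zero_iff_dvd _ p).2 h
    push_cast at this
    exact this
  have hy : (y : ZMod p) = 0 := by
    by_contra hy
    apply hqnr
    refine ⟨x / y, ?_⟩
    field_simp
    linear_combination -h0
  have hx : (x : ZMod p) = 0 := by
    rw [hy] at h0
    simpa using h0
  exact ⟨(ZMod.intCast_zmod_eq_zero_iff_dvd _ p).1 hx, (ZMod.intCast_zmod_eq_zero_iff_dvd _ p).1 hy⟩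

theorem no_rep_s13 (p : ℕ) (hp : p.Prime) (hqnr : ¬ IsSquare ((-2 : ZMod p))) (m : ℤ)
    (hm : ¬ (p : ℤ) ∣ m) (α : ℕ) :
    ∀ x y : ℤ, x ^ 2 + 2 * y ^ 2 ≠ (p : ℤ) ^ (2 * α + 1) * m := by
  have hp0 : (p : ℤ) ≠ 0 := by exact_mod_cast hp.ne_zero
  induction α with
  | zero =>
    intro x y h
    obtain ⟨⟨a, rfl⟩, ⟨b, rfl⟩⟩ := p_dvd_both p hp hqnr x y (h ▸ ⟨m, by ring⟩)
    apply hm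
    refine ⟨a ^ 2 + 2 * b ^ 2, ?_⟩
    apply mul_left_cancel₀ hp0
    linear_combination -h
  | succ k ih =>
    intro x y h
    obtain ⟨⟨a, rfl⟩, ⟨b, rfl⟩⟩ := p_dvd_both p hp hqnr x y
      (h ▸ ⟨(p : ℤ) ^ (2 * k + 2) * m, by ring⟩)
    apply ih a b
    apply mul_left_cancel₀ (pow_ne_zero 2 hp0)
    linear_combination h

theorem arg_eq (p : ℕ) (hp : p.Prime) (hp5 : 5 ≤ p) (n α : ℕ) :
    8 * (9 * p ^ (2 * α + 1) * n + (9 * p ^ (2 * α + 2) - 1) / 8) + 1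
      = 9 * p ^ (2 * α + 1) * (8 * n + p) := by
  have hodd : Odd p := hp.odd_of_ne_two (by omega)
  have h1 : (p ^ (α + 1)) ^ 2 % 8 = 1 := by
    have h := (hodd.pow (n := α + 1))
    have := Nat.odd_iff.1 h
    generalize p ^ (α + 1) = t at *
    rw [Nat.pow_mod]
    have : t % 8 = 1 ∨ t % 8 = 3 ∨ t % 8 = 5 ∨ t % 8 = 7 := by omega
    rcases this with h | h | h | h <;> simp [h]
  have h2 : p ^ (2 * α + 2) = (p ^ (α + 1)) ^ 2 := by ring
  have h3 : 9 * p ^ (2 * α + 1) * (8 * n + p)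
      = 8 * (9 * p ^ (2 * α + 1) * n) + 9 * p ^ (2 * α + 2) := by ring
  rw [h3]
  omega

theorem stmt13 (p : ℕ) (hp : p.Prime) (hp5 : 5 ≤ p)
    (hqnr : ¬ IsSquare ((-2 : ZMod p))) (n α : ℕ) (hn : ¬ p ∣ n) :
    6 ∣ Tcount 2 3 (9 * p ^ (2 * α + 1) * n + (9 * p ^ (2 * α + 2) - 1) / 8) := by
  have hN := arg_eq p hp hp5 n α
  generalize 9 * p ^ (2 * α + 1) * n + (9 * p ^ (2 * α + 2) - 1) / 8 = N at *
  have h3 : 3 ∣ Tcount 2 3 N := by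
    rw [← ZMod.natCast_eq_zero_iff, Tcount_cast_s13, coeff_pow_prime]
    apply PowerSeries.coeff_expand_of_not_dvd
    rw [mul_assoc] at hN
    omega
  have h2 : 2 ∣ Tcount 2 3 N := by
    rw [← ZMod.natCast_eq_zero_iff, Tcount_cast_s13, pow_succ, coeff_pow_prime, oddSeries_two,
      PowerSeries.coeff_mul]
    refine Finset.sum_eq_zero fun ab hab => ?_
    rw [Finset.HasAntidiagonal.mem_antidiagonal] at hab
    by_contra hne
    have hA := left_ne_zero_of_mul hne
    have hB := right_ne_zero_of_mul hne
    have h2a : 2 ∣ ab.1 := by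
      by_contra h
      exact hA (PowerSeries.coeff_expand_of_not_dvd _ _ _ h)
    obtain ⟨a, ha⟩ := h2a
    rw [ha, PowerSeries.coeff_expand_mul] at hA
    have hA' : a ∈ Set.range pentagonal := by
      by_contra h
      exact hA (PowerSeries.coeff_pentagonalSeries_eq_zero _ h)
    have hB' : ab.2 ∈ Set.range pentagonal := by
      by_contra h
      exact hB (PowerSeries.coeff_pentagonalSeries_eq_zero _ h)
    obtain ⟨k, hk⟩ := hA'
    obtain ⟨l, hl⟩ := hB'
    have ek := two_mul_natCast_pentagonal k
    have el := two_mul_natCast_pentagonal l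
    rw [hk] at ek
    rw [hl] at el
    have hab' : (2 * a + ab.2 : ℤ) = N := by rw [← hab, ha]; push_cast; ring
    have hN' : (8 * N + 1 : ℤ) = 9 * p ^ (2 * α + 1) * (8 * n + p) := by exact_mod_cast hN
    refine no_rep_s13 p hp hqnr (27 * (8 * n + p)) ?_ α (6 * l - 1) (6 * k - 1) ?_
    · intro h
      have h' : p ∣ 27 * (8 * n + p) := by exact_mod_cast h
      rcases hp.dvd_mul.1 h' with h | h
      · have : p ∣ 3 := hp.dvd_of_dvd_pow (n := 3) (by simpa using h)
        have := Nat.le_of_dvd (by norm_num) this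
        omega
      · have h := (Nat.dvd_add_left (dvd_refl p)).1 h
        rcases hp.dvd_mul.1 h with h | h
        · have : p ∣ 2 := hp.dvd_of_dvd_pow (n := 3) (by simpa using h)
          have := Nat.le_of_dvd (by norm_num) this
          omega
        · exact hn h
    · linear_combination 3 * hN' - 24 * ek - 12 * el + 24 * hab'
  omega
end

section
/- The sequence T_2(n) modulo 2 agrees with the indicator of the set {m(m+1)/2 : m ≥ 0} of triangular numbers; i.e., T_2(n) is odd if and only if 8n+1 is a perfect square. -/
open PowerSeries Finset

theorem shanks_aux {R : Type*} [CommRing R] (x : R) (u : ℕ → R)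
    (hu : ∀ j, u j * (1 - x ^ (2 * j + 1)) = 1) (n : ℕ) :
    ∑ s ∈ range n, (∏ j ∈ Ico s n, ((1 - x ^ (2 * j + 2)) * u j)) * x ^ (s * (2 * n + 1))
      = ∑ s ∈ range (2 * n), x ^ (s * (s + 1) / 2) := by
  induction n with
  | zero => simp
  | succ n ih =>
    have e1 : 2 * n * (2 * n + 1) / 2 = n * (2 * n + 1) := by
      rw [mul_assoc]; exact Nat.mul_div_cancel_left _ (by norm_num)
    have e2 : (2 * n + 1) * (2 * n + 1 + 1) / 2 = (2 * n + 1) * (n + 1) := by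
      rw [show (2 * n + 1) * (2 * n + 1 + 1) = 2 * ((2 * n + 1) * (n + 1)) by ring]
      exact Nat.mul_div_cancel_left _ (by norm_num)
    rw [show 2 * (n + 1) = 2 * n + 1 + 1 by ring, sum_range_succ _ (2 * n + 1),
      sum_range_succ _ (2 * n), ← ih, e1, e2, sum_range_succ _ n]
    set G : ℕ → R := fun s =>
      (∏ j ∈ Ico s n, ((1 - x ^ (2 * j + 2)) * u j)) * (1 - x ^ (2 * s)) * x ^ (s * (2 * n + 1))
      with hG
    have key : ∀ s ∈ range n,
        (∏ j ∈ Ico s (n + 1), ((1 - x ^ (2 * j + 2)) * u j)) * x ^ (s * (2 * n + 1 + 1 + 1))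
        = (∏ j ∈ Ico s n, ((1 - x ^ (2 * j + 2)) * u j)) * x ^ (s * (2 * n + 1))
          + u n * (G (s + 1) - G s) := by
      intro s hs
      have hs' : s < n := mem_range.mp hs
      rw [prod_Ico_succ_top hs'.le]
      simp only [hG]
      rw [prod_eq_prod_Ico_succ_bot hs']
      set Q := ∏ j ∈ Ico (s + 1) n, ((1 - x ^ (2 * j + 2)) * u j)
      have h1 := hu s
      have h2 := hu n
      have p1 : x ^ (s * (2 * n + 1 + 1 + 1)) = x ^ (s * (2 * n + 1)) * x ^ (2 * s) := by ring
      have p2 : x ^ ((s + 1) * (2 * n + 1)) = x ^ (s * (2 * n + 1)) * x ^ (2 * n + 1) := by ring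
      have p3 : x ^ (2 * (s + 1)) = x ^ (2 * s) * x ^ 2 := by ring
      have p4 : x ^ (2 * s + 2) = x ^ (2 * s) * x ^ 2 := by ring
      have p5 : x ^ (2 * s + 1) = x ^ (2 * s) * x := by ring
      have p6 : x ^ (2 * n + 2) = x ^ (2 * n + 1) * x := by ring
      rw [p1, p2, p3, p4, p6]
      rw [p5] at h1
      generalize x ^ (2 * n + 1) = a at *
      generalize x ^ (2 * s) = b at *
      generalize x ^ (s * (2 * n + 1)) = c at *
      linear_combination ((1 - b * x ^ 2) * Q * c * u n * a) * h1
        + ((1 - b * x ^ 2) * u s * Q * c) * h2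
    rw [sum_congr rfl key, sum_add_distrib, ← mul_sum, sum_range_sub]
    simp only [hG]
    have h2 := hu n
    have p0 : x ^ (n * (2 * n + 1 + 1 + 1)) = x ^ (n * (2 * n + 1)) * x ^ (2 * n) := by ring
    have p1 : x ^ ((2 * n + 1) * (n + 1)) = x ^ (n * (2 * n + 1)) * x ^ (2 * n + 1) := by ring
    have p2 : x ^ (2 * n + 2) = x ^ (2 * n) * x ^ 2 := by ring
    have p3 : x ^ (2 * n + 1) = x ^ (2 * n) * x := by ring
    rw [p0, p1, p3]
    rw [p3] at h2
    simp [p2]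
    generalize x ^ (n * (2 * n + 1)) = c at *
    generalize x ^ (2 * n) = b at *
    linear_combination (c * (1 + b * x)) * h2

theorem tcount_eq (n : ℕ) : (Tcount 2 3 n : ZMod 2) = coeff n
    ((PowerSeries.mk fun n ↦ (#(Nat.Partition.restricted n (¬ 2 ∣ ·)) : ZMod 2)) ^ 3) := by
  have h : Tcount 2 3 n = ∑ l ∈ piAntidiag (univ : Finset (Fin 3)) n,
      ∏ i, #(Nat.Partition.restricted (l i) (¬ 2 ∣ ·)) := by
    let e : {f : Fin 3 → Σ m : ℕ, Nat.Partition m //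
        (∑ i, (f i).1) = n ∧ ∀ i, ∀ p ∈ (f i).2.parts, ¬ 2 ∣ p} ≃
        Σ l : {l // l ∈ piAntidiag (univ : Finset (Fin 3)) n},
          ∀ i, {p // p ∈ Nat.Partition.restricted (l.1 i) (¬ 2 ∣ ·)} :=
      { toFun := fun f => ⟨⟨fun i => (f.1 i).1, by simpa using f.2.1⟩,
          fun i => ⟨(f.1 i).2, by simpa [Nat.Partition.restricted] using f.2.2 i⟩⟩
        invFun := fun g => ⟨fun i => ⟨g.1.1 i, (g.2 i).1⟩, (mem_piAntidiag.mp g.1.2).1,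
          fun i => by simpa [Nat.Partition.restricted] using (g.2 i).2⟩
        left_inv := fun f => rfl
        right_inv := fun g => rfl }
    unfold Tcount
    rw [Nat.card_congr e, Nat.card_eq_fintype_card, Fintype.card_sigma,
      ← sum_coe_sort (piAntidiag (univ : Finset (Fin 3)) n)
        (fun l => ∏ i, #(Nat.Partition.restricted (l i) (¬ 2 ∣ ·)))]
    refine sum_congr rfl fun l _ => ?_
    rw [Fintype.card_pi]
    simp
  have h3 : ∀ A : (ZMod 2)⟦X⟧, A ^ 3 = ∏ _i : Fin 3, A := by intro A; simp
  rw [h, h3, coeff_prod]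
  push_cast
  refine (sum_nbij' (fun l : Fin 3 →₀ ℕ => (l : Fin 3 → ℕ)) (fun l : Fin 3 → ℕ => Finsupp.equivFunOnFinite.symm l)
    ?_ ?_ ?_ ?_ ?_).symm
  · intro l hl; simpa using hl
  · intro l hl; simpa using hl
  · intro l hl; ext; simp
  · intro l hl; ext; simp
  · intro l hl; simp

open PowerSeries.WithPiTopology Filter Nat.Partition in
theorem coeff_cube (N : ℕ) : coeff N
    ((PowerSeries.mk fun n ↦ (#(Nat.Partition.restricted n (¬ 2 ∣ ·)) : ZMod 2)) ^ 3)
    = ∑ s ∈ range (2 * (N + 1)), if N = s * (s + 1) / 2 then 1 else 0 := by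
  let _ : TopologicalSpace (ZMod 2) := ⊥
  have _ : DiscreteTopology (ZMod 2) := ⟨rfl⟩
  have hO := hasProd_powerSeriesMk_card_restricted (ZMod 2) (¬ 2 ∣ ·)
  have hD := hasProd_powerSeriesMk_card_countRestricted (ZMod 2) (m := 2) (by norm_num)
  rw [← powerSeriesMk_card_restricted_eq_powerSeriesMk_card_countRestricted (ZMod 2)
    (m := 2) (by norm_num)] at hD
  set O := (PowerSeries.mk fun n ↦ (#(Nat.Partition.restricted n (¬ 2 ∣ ·)) : ZMod 2))
  have t1 := hO.tendsto_prod_nat.comp (tendsto_id.const_mul_atTop' (show 0 < 2 by norm_num))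
  have t2 := hD.tendsto_prod_nat
  have t3 := t1.mul (t2.pow 2)
  let u : ℕ → (ZMod 2)⟦X⟧ := fun j => ∑' k : ℕ, X ^ ((2 * j + 1) * k)
  have hu : ∀ j, u j * (1 - X ^ (2 * j + 1)) = 1 := by
    intro j
    simp only [u, pow_mul X (2 * j + 1)]
    exact tsum_pow_mul_one_sub_of_constantCoeff_eq_zero (by simp)
  have two0 : (2 : (ZMod 2)⟦X⟧) = 0 := by
    have h := congrArg (C (R := ZMod 2)) (show (2 : ZMod 2) = 0 from rfl)
    rwa [map_ofNat, map_zero] at h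
  have hP : ∀ n, (∏ i ∈ range (2 * n), if ¬ 2 ∣ i + 1 then
      ∑' j : ℕ, (X : (ZMod 2)⟦X⟧) ^ ((i + 1) * j) else 1) *
      (∏ i ∈ range n, ∑ j ∈ range 2, (X : (ZMod 2)⟦X⟧) ^ ((i + 1) * j)) ^ 2
      = ∏ j ∈ Ico 0 n, ((1 - X ^ (2 * j + 2)) * u j) := by
    intro n
    rw [← prod_pow, Nat.Ico_zero_eq_range]
    induction n with
    | zero => simp
    | succ n ih =>
      rw [prod_range_succ _ n, prod_range_succ _ n, ← ih,
        show 2 * (n + 1) = 2 * n + 1 + 1 by ring, prod_range_succ _ (2 * n + 1),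
        prod_range_succ _ (2 * n), if_pos (show ¬ 2 ∣ 2 * n + 1 by omega),
        if_neg (show ¬ ¬ 2 ∣ 2 * n + 1 + 1 by omega)]
      have : (∑ j ∈ range 2, (X : (ZMod 2)⟦X⟧) ^ ((n + 1) * j)) ^ 2 = 1 - X ^ (2 * n + 2) := by
        simp only [sum_range_succ, range_zero, sum_empty, mul_zero, pow_zero, mul_one, zero_add]
        have p : (X : (ZMod 2)⟦X⟧) ^ (2 * n + 2) = (X ^ (n + 1)) ^ 2 := by ring
        rw [p]
        linear_combination (X ^ (n + 1) + (X ^ (n + 1)) ^ 2) * two0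
      rw [this]
      simp only [u]
      ring
  have hc := (tendsto_iff_coeff_tendsto _ _ _ _).mp t3 N
  have hO3 : O * O ^ 2 = O ^ 3 := by ring
  rw [hO3] at hc
  refine tendsto_nhds_unique hc (tendsto_nhds_of_eventually_eq ?_)
  filter_upwards [eventually_ge_atTop (N + 1)] with n hn
  have hs := shanks_aux (X : (ZMod 2)⟦X⟧) u hu n
  obtain ⟨m, rfl⟩ : ∃ m, n = m + 1 := ⟨n - 1, by omega⟩
  rw [sum_range_succ'] at hs
  have hs2 := congrArg (coeff N) hs
  rw [map_add, map_sum, map_sum, sum_eq_zero, zero_add] at hs2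
  · have : coeff N (∏ j ∈ Ico 0 (m + 1), ((1 - (X : (ZMod 2)⟦X⟧) ^ (2 * j + 2)) * u j)) =
        ∑ s ∈ range (2 * (N + 1)), if N = s * (s + 1) / 2 then 1 else 0 := by
      simp only [zero_mul, pow_zero, mul_one, coeff_X_pow] at hs2
      rw [hs2]
      symm
      apply sum_subset
      · exact range_subset_range.mpr (by omega)
      · intro s _ h
        rw [if_neg]
        intro he
        have h' : 2 * (N + 1) ≤ s := by simpa using h
        have : N + 1 ≤ s * (s + 1) / 2 := by
          rw [Nat.le_div_iff_mul_le (by norm_num)]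
          nlinarith
        omega
    rw [← this, ← hP]
    rfl
  · intro s _
    rw [coeff_mul_X_pow', if_neg]
    nlinarith

theorem stmt14 (n : ℕ) :
    Odd (Tcount 2 3 n) ↔ ∃ m : ℕ, m * m = 8 * n + 1 := by
  have hT : ∀ s, 2 * (s * (s + 1) / 2) = s * (s + 1) := fun s =>
    Nat.mul_div_cancel' (Nat.even_mul_succ_self s).two_dvd
  rw [← ZMod.natCast_eq_one_iff_odd, tcount_eq, coeff_cube]
  constructor
  · intro h
    obtain ⟨s, _, hs⟩ := exists_ne_zero_of_sum_ne_zero (h ▸ one_ne_zero)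
    have hs' : n = s * (s + 1) / 2 := by
      by_contra hne
      exact hs (if_neg hne)
    have := hT s
    exact ⟨2 * s + 1, by rw [← hs'] at this; nlinarith⟩
  · rintro ⟨m, hm⟩
    have hodd : Odd m := by
      by_contra he
      obtain ⟨k, rfl⟩ := Nat.not_odd_iff_even.mp he
      have : 2 * (2 * (k * k)) = 8 * n + 1 := by rw [← hm]; ring
      omega
    obtain ⟨s, rfl⟩ := hodd
    have h2n : 2 * n = s * (s + 1) := by nlinarith
    have hT' := hT s
    rw [sum_eq_single s]
    · rw [if_pos (by omega)]
    · intro t _ hts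
      rw [if_neg]
      intro he
      have h1 := hT t
      rw [← he, h2n] at h1
      apply hts
      rcases lt_trichotomy t s with h | h | h
      · nlinarith
      · exact h
      · nlinarith
    · intro hns
      exfalso
      apply hns
      rw [mem_range]
      nlinarith
end

section
/- For all n ≥ 0, T_2(3n+2) ≡ 0 (mod 6). -/
open Finset PowerSeries

/-- The number of partitions into odd parts is odd exactly at the pentagonal numbers. -/
theorem card_restricted_mod_two (m : ℕ) :
    ((#(Nat.Partition.restricted m (¬ 2 ∣ ·)) : ℕ) : ZMod 2) =
      (PowerSeries.pentagonalSeries (ZMod 2)).coeff m := by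
  let : TopologicalSpace (ZMod 2) := ⊥
  have : DiscreteTopology (ZMod 2) := ⟨rfl⟩
  have h1 := Nat.Partition.powerSeriesMk_card_countRestricted_eq_tprod (R := ZMod 2) (m := 2)
    (by norm_num)
  have h2 := PowerSeries.WithPiTopology.tprod_one_sub_X_pow (ZMod 2)
  have h3 : PowerSeries.pentagonalSeries (ZMod 2) =
      PowerSeries.mk fun n ↦ ((#(Nat.Partition.countRestricted n 2) : ℕ) : ZMod 2) := by
    rw [h1, ← h2]
    congr 1
    funext n
    rw [Finset.sum_range_succ, Finset.sum_range_one, sub_eq_add_neg]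
    have h : (-1 : (ZMod 2)⟦X⟧) = 1 := by
      have : (-1 : ZMod 2) = 1 := by decide
      rw [← map_one (PowerSeries.C (R := ZMod 2)), ← map_neg, this]
    rw [← neg_one_mul, h]
    simp
  rw [h3, PowerSeries.coeff_mk, Nat.Partition.card_restricted_eq_card_countRestricted m (by norm_num)]

open Classical in
theorem coeff_pent (m : ℕ) : (PowerSeries.pentagonalSeries (ZMod 2)).coeff m =
    if m ∈ Set.range pentagonal then 1 else 0 := by
  split_ifs with h
  · obtain ⟨k, rfl⟩ := h
    rw [PowerSeries.coeff_pentagonalSeries_pentagonal]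
    rcases Int.even_or_odd k with hk | hk
    · simp [Int.negOnePow_even _ hk]
    · simp [Int.negOnePow_odd _ hk]
  · exact PowerSeries.coeff_pentagonalSeries_eq_zero _ h

theorem abs_le_pent (k : ℤ) : |k| ≤ pentagonal k := by
  have h := two_mul_natCast_pentagonal k
  rcases le_total 0 k with hk | hk
  · rw [abs_of_nonneg hk]
    rcases hk.eq_or_lt with rfl | hk
    · simp
    · nlinarith
  · rw [abs_of_nonpos hk]; nlinarith

theorem ite_and_mul_zero_one (p q : Prop) [Decidable p] [Decidable q] :
    (if p ∧ q then (1 : ZMod 2) else 0) = (if p then 1 else 0) * (if q then 1 else 0) := by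
  split_ifs <;> simp_all

/-- Parity of the number of pairs of pentagonal numbers with `pent j + 2 pent k = 3n+2`. -/
theorem sum_pent_even (n : ℕ) :
    ∑ i ∈ range ((3 * n + 2) / 2 + 1), (PowerSeries.pentagonalSeries (ZMod 2)).coeff i *
      (PowerSeries.pentagonalSeries (ZMod 2)).coeff (3 * n + 2 - 2 * i) = 0 := by
  classical
  set N := 3 * n + 2 with hN
  let B : Finset (ℤ × ℤ) := (Icc (-(N : ℤ)) N ×ˢ Icc (-(N : ℤ)) N).filter
    (fun p ↦ pentagonal p.1 + 2 * pentagonal p.2 = N)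
  have memB : ∀ p : ℤ × ℤ, p ∈ B ↔ pentagonal p.1 + 2 * pentagonal p.2 = N := by
    intro p
    simp only [B, mem_filter, mem_product, mem_Icc, and_iff_right_iff_imp]
    intro h
    have h1 := abs_le.1 (abs_le_pent p.1)
    have h2 := abs_le.1 (abs_le_pent p.2)
    omega
  have key : ∀ p ∈ B, (3 : ℤ) ∣ p.1 - p.2 - 2 := by
    intro p hp
    rw [memB] at hp
    have e1 := two_mul_natCast_pentagonal p.1
    have e2 := two_mul_natCast_pentagonal p.2
    have e3 : 3 * (p.1 * p.1) - p.1 + 2 * (3 * (p.2 * p.2) - p.2) = 2 * (3 * n + 2) := by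
      have : (pentagonal p.1 : ℤ) + 2 * pentagonal p.2 = 3 * n + 2 := by exact_mod_cast hp
      linarith
    omega
  have hB : ∑ _p ∈ B, (1 : ZMod 2) = 0 := by
    refine Finset.sum_involution
      (fun p _ ↦ ((p.1 - 4 * p.2 + 1) / 3, (-2 * p.1 - p.2 + 1) / 3)) ?_ ?_ ?_ ?_
    · intro p hp; exact CharTwo.add_self_eq_zero _
    · intro p hp _ h
      have := key p hp
      rw [Prod.ext_iff] at h
      simp only at h
      omega
    · intro p hp
      obtain ⟨c, hc⟩ := key p hp
      have hp' := (memB p).1 hp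
      rw [memB]
      obtain ⟨j, k⟩ := p
      simp only at hc hp' ⊢
      have hj : j = k + 3 * c + 2 := by omega
      have a1 : (j - 4 * k + 1) / 3 = c - k + 1 := by omega
      have a2 : (-2 * j - k + 1) / 3 = -k - 2 * c - 1 := by omega
      rw [a1, a2]
      have e1 := two_mul_natCast_pentagonal j
      have e2 := two_mul_natCast_pentagonal k
      have e3 := two_mul_natCast_pentagonal (c - k + 1)
      have e4 := two_mul_natCast_pentagonal (-k - 2 * c - 1)
      subst hj
      zify at hp' ⊢
      nlinarith
    · intro p hp
      have := key p hp
      ext <;> simp only <;> omega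
  rw [← hB]
  simp_rw [coeff_pent, ← ite_and_mul_zero_one]
  rw [← Finset.sum_filter]
  symm
  refine Finset.sum_bij (fun p _ ↦ pentagonal p.2) ?_ ?_ ?_ ?_
  · intro p hp
    rw [memB] at hp
    rw [mem_filter, mem_range]
    exact ⟨by omega, ⟨p.2, rfl⟩, ⟨p.1, by omega⟩⟩
  · intro p hp q hq h
    rw [memB] at hp hq
    have h1 := pentagonal_injective h
    have h2 : pentagonal p.1 = pentagonal q.1 := by omega
    exact Prod.ext (pentagonal_injective h2) h1
  · intro i hi
    rw [mem_filter, mem_range] at hi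
    obtain ⟨hi, ⟨k, hk⟩, ⟨j, hj⟩⟩ := hi
    exact ⟨(j, k), (memB _).2 (by simp only; omega), hk⟩
  · intros; rfl

abbrev Trip (N : ℕ) := {f : Fin 3 → Σ m : ℕ, Nat.Partition m //
    (∑ i, (f i).1) = N ∧ ∀ i, ∀ p ∈ (f i).2.parts, ¬ 2 ∣ p}

def permTrip (N : ℕ) (e : Equiv.Perm (Fin 3)) : Function.End (Trip N) := fun f ↦
  ⟨fun i ↦ f.1 (e i), by rw [Equiv.sum_comp e (fun i ↦ (f.1 i).1)]; exact f.2.1,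
    fun i ↦ f.2.2 (e i)⟩

theorem three_dvd (n : ℕ) [Finite (Trip (3 * n + 2))] : 3 ∣ Nat.card (Trip (3 * n + 2)) := by
  classical
  have := Fintype.ofFinite (Trip (3 * n + 2))
  have : Fact (Nat.Prime 3) := ⟨Nat.prime_three⟩
  let g := permTrip (3 * n + 2) (finRotate 3)
  have hg : g ^ 3 ^ 1 = 1 := by
    funext f
    apply Subtype.ext
    funext i
    fin_cases i <;> rfl
  have h := Equiv.Perm.card_fixedPoints_modEq hg
  rw [← @Nat.card_eq_fintype_card _ _, ← @Nat.card_eq_fintype_card _ (_)] at h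
  have h0 : Nat.card (Function.fixedPoints g) = 0 := by
    rw [Nat.card_eq_zero]
    left
    refine ⟨fun ⟨f, hf⟩ ↦ ?_⟩
    have h1 : ∀ i, f.1 (finRotate 3 i) = f.1 i := fun i ↦ congrFun (congrArg Subtype.val hf) i
    have a : f.1 1 = f.1 0 := h1 0
    have b : f.1 2 = f.1 1 := h1 1
    have := f.2.1
    rw [Fin.sum_univ_three, b, a] at this
    omega
  rw [h0] at h
  exact (Nat.modEq_zero_iff_dvd).1 h

abbrev Fixd (N : ℕ) := Σ i : Fin (N / 2 + 1),
  (Nat.Partition.restricted i.1 (¬ 2 ∣ ·)) × (Nat.Partition.restricted (N - 2 * i.1) (¬ 2 ∣ ·))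

def fixMap (N : ℕ) (x : Fixd N) : Function.fixedPoints (permTrip N (Equiv.swap 0 1)) :=
  ⟨⟨![⟨x.1.1, x.2.1.1⟩, ⟨x.1.1, x.2.1.1⟩, ⟨N - 2 * x.1.1, x.2.2.1⟩], by
    have h1 := (mem_filter.1 x.2.1.2).2
    have h2 := (mem_filter.1 x.2.2.2).2
    refine ⟨?_, ?_⟩
    · rw [Fin.sum_univ_three]
      have := x.1.2
      simp
      omega
    · intro i
      fin_cases i
      · exact h1
      · exact h1
      · exact h2⟩, by
    apply Subtype.ext
    funext i
    fin_cases i <;> rfl⟩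

theorem fixMap_bij (N : ℕ) : Function.Bijective (fixMap N) := by
  constructor
  · rintro ⟨⟨i, hi⟩, ⟨a, ha⟩, ⟨b, hb⟩⟩ ⟨⟨i', hi'⟩, ⟨a', ha'⟩, ⟨b', hb'⟩⟩ h
    have h' := congrArg (fun z ↦ z.1.1) h
    have h0 : (⟨i, a⟩ : Σ m : ℕ, Nat.Partition m) = ⟨i', a'⟩ := congrFun h' 0
    have h2 : (⟨N - 2 * i, b⟩ : Σ m : ℕ, Nat.Partition m) = ⟨N - 2 * i', b'⟩ := congrFun h' 2
    cases h0
    simp only [Sigma.mk.injEq, heq_eq_eq, true_and] at h2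
    subst h2
    rfl
  · rintro ⟨⟨f, hs, ho⟩, hf⟩
    have h01 : f 1 = f 0 := by
      have := congrFun (congrArg Subtype.val hf) 0
      simpa [permTrip] using this
    rw [Fin.sum_univ_three, h01] at hs
    have o0 := ho 0
    have o2 := ho 2
    rcases h0 : f 0 with ⟨i, a⟩
    rcases h2 : f 2 with ⟨j, b⟩
    rw [h0] at o0
    rw [h2] at o2
    rw [h0, h2] at hs
    simp only at hs o0 o2
    obtain rfl : j = N - 2 * i := by omega
    refine ⟨⟨⟨i, by omega⟩, ⟨a, mem_filter.2 ⟨mem_univ _, o0⟩⟩,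
      ⟨b, mem_filter.2 ⟨mem_univ _, o2⟩⟩⟩, ?_⟩
    apply Subtype.ext
    apply Subtype.ext
    funext t
    fin_cases t
    · exact h0.symm
    · exact (h01.trans h0).symm
    · exact h2.symm

theorem two_dvd (n : ℕ) [Finite (Trip (3 * n + 2))] : 2 ∣ Nat.card (Trip (3 * n + 2)) := by
  classical
  have := Fintype.ofFinite (Trip (3 * n + 2))
  have : Fact (Nat.Prime 2) := ⟨Nat.prime_two⟩
  let g := permTrip (3 * n + 2) (Equiv.swap 0 1)
  have hg : g ^ 2 ^ 1 = 1 := by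
    funext f
    apply Subtype.ext
    funext i
    fin_cases i <;> rfl
  have h := Equiv.Perm.card_fixedPoints_modEq hg
  rw [← @Nat.card_eq_fintype_card _ _, ← @Nat.card_eq_fintype_card _ (_),
    ← Nat.card_congr (Equiv.ofBijective _ (fixMap_bij (3 * n + 2)))] at h
  rw [← Nat.modEq_zero_iff_dvd]
  refine h.trans ?_
  rw [Nat.card_eq_fintype_card, Nat.modEq_zero_iff_dvd, ← ZMod.natCast_eq_zero_iff, Fintype.card_sigma]
  simp only [Fintype.card_prod, Fintype.card_coe]
  push_cast
  simp only [card_restricted_mod_two]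
  rw [← sum_pent_even n, Finset.sum_range]

theorem stmt19 (n : ℕ) : 6 ∣ Tcount 2 3 (3 * n + 2) := by
  change 6 ∣ Nat.card (Trip (3 * n + 2))
  rcases finite_or_infinite (Trip (3 * n + 2)) with h | h
  · have h2 := two_dvd n
    have h3 := three_dvd n
    omega
  · rw [Nat.card_eq_zero_of_infinite]
    exact dvd_zero 6
end
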